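/- Let p = 3. Under the null hypothesis of uniformity, i.e., under P_0^{(n)} = U_3^{⊗n} on (S^2)^n, the two-sided test statistic T_±^{(n)}(x) := √n max( |3 λ̂_{n1}(x) − 1|, |3 λ̂_{n3}(x) − 1| ) converges in distribution, as n → ∞, to the probability distribution on ℝ with cumulative distribution function ℓ ↦ { 2 Φ(√5 ℓ / 2) + 6 Φ''(√5 ℓ / 2) − 2√3 Φ''(√5 ℓ / √3) − 1 } · 1[ℓ > 0], where Φ is the standard normal cumulative distribution function and Φ''(t) = −t e^{−t²/2}/√(2π) is its second derivative. -/

import Mathlib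

open MeasureTheory ProbabilityTheory Filter Matrix Real
open scoped ENNReal NNReal Topology

noncomputable section

/-- The sample covariance matrix `S_n(x) = (1/n) Σ_i x_i x_i'`. -/
def Sn (p n : ℕ) (x : Fin n → (Fin p → ℝ)) : Matrix (Fin p) (Fin p) ℝ :=
  Matrix.of fun a b => (1 / (n:ℝ)) * ∑ i, x i a * x i b

/-- Largest eigenvalue of a (symmetric) real matrix, via the Rayleigh quotient. -/
def maxEig {p : ℕ} (A : Matrix (Fin p) (Fin p) ℝ) : ℝ :=
  sSup {r | ∃ v : Fin p → ℝ, (∑ i, v i ^ 2) = 1 ∧ r = v ⬝ᵥ A.mulVec v}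

/-- Smallest eigenvalue of a (symmetric) real matrix, via the Rayleigh quotient. -/
def minEig {p : ℕ} (A : Matrix (Fin p) (Fin p) ℝ) : ℝ :=
  sInf {r | ∃ v : Fin p → ℝ, (∑ i, v i ^ 2) = 1 ∧ r = v ⬝ᵥ A.mulVec v}

/-- The standard normal cumulative distribution function `Φ`. -/
def stdNormalCDF (t : ℝ) : ℝ :=
  ∫ u in Set.Iic t, (Real.sqrt (2 * Real.pi))⁻¹ * Real.exp (-u ^ 2 / 2)

/-- The second derivative `Φ''(t) = -t e^{-t²/2}/√(2π)` of the standard normal cdf. -/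
def stdNormalCDF'' (t : ℝ) : ℝ := -t * Real.exp (-t ^ 2 / 2) / Real.sqrt (2 * Real.pi)

/-!
A traceless symmetric `3 × 3` matrix is a vector of `ℝ⁵`, and `T_±^{(n)} ≤ ℓ` says that `√n` times
the traceless part of `Sn` lies in a multiple of the unit ball of the spectral norm, a convex set.
Up to scale this vector is the normalized sum of the degree-two spherical harmonics of the
observations, which under uniformity are centred with identity covariance; by the central limit
theorem the limit is the standard Gaussian measure of the ball on `ℝ⁵`.

With the trace and the Frobenius norm fixed, the spectral norm depends only on the determinant,
i.e. on Cartan's cubic form on `ℝ⁵`. This form satisfies the Cartan–Münzner equations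
`|∇F|² = 9‖y‖⁴` and `ΔF = 0`. Integrating its powers against a Gaussian weight by parts, they give
the moments of `F` on `S⁴`, which are those of the uniform law on `[-1, 1]`: an analogue of
Archimedes' theorem. In polar coordinates the Gaussian measure of the ball thus reduces to
one-dimensional integrals.
-/

/-! ### Polar coordinates -/

section Polar

open Module Metric

variable {E : Type*} [NormedAddCommGroup E] [NormedSpace ℝ E] [FiniteDimensional ℝ E]
  [MeasurableSpace E] [BorelSpace E]

lemma measurableEmbedding_smul_sphere :
    MeasurableEmbedding fun p : sphere (0 : E) 1 × Set.Ioi (0 : ℝ) => (p.2 : ℝ) • (p.1 : E) := by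
  have h := (MeasurableEmbedding.subtype_coe (measurableSet_singleton (0 : E)).compl).comp
    (homeomorphUnitSphereProd E).symm.measurableEmbedding
  exact h

variable (μ : Measure E) [μ.IsAddHaarMeasure]

lemma measurePreserving_smul_sphere [Nontrivial E] :
    MeasurePreserving (fun p : sphere (0 : E) 1 × Set.Ioi (0 : ℝ) => (p.2 : ℝ) • (p.1 : E))
      (μ.toSphere.prod (.volumeIoiPow (finrank ℝ E - 1))) μ := by
  have hval : MeasurePreserving ((↑) : ({0}ᶜ : Set E) → E) (μ.comap (↑)) μ := by
    simpa using measurePreserving_subtype_coe (μa := μ) (measurableSet_singleton (0 : E)).compl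
  exact hval.comp (MeasurePreserving.symm (homeomorphUnitSphereProd E).toMeasurableEquiv
    μ.measurePreserving_homeomorphUnitSphereProd)

lemma integral_volumeIoiPow (n : ℕ) (g : ℝ → ℝ) :
    ∫ r : Set.Ioi (0 : ℝ), g r ∂(Measure.volumeIoiPow n) =
      ∫ r in Set.Ioi (0 : ℝ), r ^ n * g r := by
  simp only [Measure.volumeIoiPow, ENNReal.ofReal]
  rw [integral_withDensity_eq_integral_smul (by fun_prop),
    integral_subtype_comap measurableSet_Ioi fun r : ℝ => Real.toNNReal (r ^ n) • g r]
  refine setIntegral_congr_fun measurableSet_Ioi fun r (hr : 0 < r) => ?_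
  simp [NNReal.smul_def, hr.le]

lemma integrable_volumeIoiPow (n : ℕ) (g : ℝ → ℝ) :
    Integrable (fun r : Set.Ioi (0 : ℝ) => g r) (Measure.volumeIoiPow n) ↔
      IntegrableOn (fun r => r ^ n * g r) (Set.Ioi 0) := by
  rw [integrableOn_iff_comap_subtypeVal measurableSet_Ioi, Measure.volumeIoiPow,
    integrable_withDensity_iff_integrable_smul' (by fun_prop) (by simp)]
  refine integrable_congr (.of_forall fun r => ?_)
  simp [ENNReal.toReal_ofReal, r.2.out.le]

end Polar

/-! ### Homogeneous functions against the Gaussian weight -/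

lemma integrableOn_pow_mul_exp_neg_sq_half (n : ℕ) :
    IntegrableOn (fun r : ℝ => r ^ n * rexp (-r ^ 2 / 2)) (Set.Ioi 0) := by
  have hn : (-1 : ℝ) < n := neg_one_lt_zero.trans_le n.cast_nonneg
  refine (integrable_rpow_mul_exp_neg_mul_sq (b := 1 / 2) (by norm_num) hn).integrableOn.congr_fun
    (fun r _ => ?_) measurableSet_Ioi
  simp only [rpow_natCast]
  ring_nf

lemma integral_Ioi_pow_mul_exp_neg_sq_half (n : ℕ) :
    ∫ r in Set.Ioi (0 : ℝ), r ^ n * rexp (-r ^ 2 / 2) =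
      (1 / 2 : ℝ) ^ (-((n : ℝ) + 1) / 2) * (1 / 2) * Real.Gamma (((n : ℝ) + 1) / 2) := by
  have hn : (-1 : ℝ) < n := neg_one_lt_zero.trans_le n.cast_nonneg
  rw [← integral_rpow_mul_exp_neg_mul_rpow two_pos hn one_half_pos]
  refine setIntegral_congr_fun measurableSet_Ioi fun r _ => ?_
  simp only [rpow_natCast, rpow_ofNat]
  ring_nf

lemma integral_Ioi_pow_add_two_mul_exp_neg_sq_half (n : ℕ) :
    ∫ r in Set.Ioi (0 : ℝ), r ^ (n + 2) * rexp (-r ^ 2 / 2) =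
      (n + 1) * ∫ r in Set.Ioi (0 : ℝ), r ^ n * rexp (-r ^ 2 / 2) := by
  have hgamma : (((n + 2 : ℕ) : ℝ) + 1) / 2 = ((n : ℝ) + 1) / 2 + 1 := by push_cast; ring
  have hpow : -(((n + 2 : ℕ) : ℝ) + 1) / 2 = -((n : ℝ) + 1) / 2 - 1 := by push_cast; ring
  rw [integral_Ioi_pow_mul_exp_neg_sq_half, integral_Ioi_pow_mul_exp_neg_sq_half, hgamma, hpow,
    Real.Gamma_add_one (by positivity), rpow_sub_one (by norm_num)]
  ring

lemma integral_Ioi_pow_mul_exp_neg_sq_half_pos (n : ℕ) :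
    0 < ∫ r in Set.Ioi (0 : ℝ), r ^ n * rexp (-r ^ 2 / 2) := by
  rw [integral_Ioi_pow_mul_exp_neg_sq_half]
  have := Real.Gamma_pos_of_pos (s := ((n : ℝ) + 1) / 2) (by positivity)
  positivity

section Homogeneous

open Module Metric

variable {E : Type*} [NormedAddCommGroup E] [NormedSpace ℝ E] {f : E → ℝ} {N : ℕ}

lemma homogeneous_mul_exp_smul_sphere (hf : ∀ (r : ℝ) y, f (r • y) = r ^ N * f y) (r : ℝ)
    (ω : sphere (0 : E) 1) :
    f (r • (ω : E)) * rexp (-‖r • (ω : E)‖ ^ 2 / 2) = f ω * (r ^ N * rexp (-r ^ 2 / 2)) := by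
  rw [hf, norm_smul, norm_eq_of_mem_sphere, mul_one, Real.norm_eq_abs, sq_abs]
  ring

variable [FiniteDimensional ℝ E] [Nontrivial E] [MeasurableSpace E] [BorelSpace E]
  (μ : Measure E) [μ.IsAddHaarMeasure]

lemma integral_homogeneous_mul_exp (hf : ∀ (r : ℝ) y, f (r • y) = r ^ N * f y) :
    ∫ y, f y * rexp (-‖y‖ ^ 2 / 2) ∂μ = (∫ ω, f ω ∂μ.toSphere) *
      ∫ r in Set.Ioi (0 : ℝ), r ^ (finrank ℝ E - 1 + N) * rexp (-r ^ 2 / 2) := by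
  rw [← (measurePreserving_smul_sphere μ).integral_comp measurableEmbedding_smul_sphere]
  simp only [homogeneous_mul_exp_smul_sphere hf]
  rw [integral_prod_mul (fun ω : sphere (0 : E) 1 => f ω)
    (fun r : Set.Ioi (0 : ℝ) => (r : ℝ) ^ N * rexp (-(r : ℝ) ^ 2 / 2)),
    integral_volumeIoiPow _ fun r => r ^ N * rexp (-r ^ 2 / 2)]
  simp only [pow_add, mul_assoc]

lemma integrable_homogeneous_mul_exp (hc : Continuous f)
    (hf : ∀ (r : ℝ) y, f (r • y) = r ^ N * f y) :
    Integrable (fun y => f y * rexp (-‖y‖ ^ 2 / 2)) μ := by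
  rw [← (measurePreserving_smul_sphere μ).integrable_comp_emb measurableEmbedding_smul_sphere]
  simp only [Function.comp_def, homogeneous_mul_exp_smul_sphere hf]
  refine Integrable.mul_prod (f := fun ω : sphere (0 : E) 1 => f ω)
    (g := fun r : Set.Ioi (0 : ℝ) => (r : ℝ) ^ N * rexp (-(r : ℝ) ^ 2 / 2)) ?_ ?_
  · exact (hc.comp continuous_subtype_val).integrable_of_hasCompactSupport
      (HasCompactSupport.of_compactSpace _)
  · rw [integrable_volumeIoiPow _ fun r => r ^ N * rexp (-r ^ 2 / 2)]
    simpa only [pow_add, mul_assoc] using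
      integrableOn_pow_mul_exp_neg_sq_half (finrank ℝ E - 1 + N)

end Homogeneous

/-! ### Polynomials against the Gaussian weight -/

section PolynomialGaussian

open MvPolynomial Metric

lemma eval_smul_of_isHomogeneous {ι R : Type*} [CommSemiring R] {p : MvPolynomial ι R} {N : ℕ}
    (hp : p.IsHomogeneous N) (r : R) (y : ι → R) : eval (r • y) p = r ^ N * eval y p := by
  rw [eval_eq, eval_eq, Finset.mul_sum]
  refine Finset.sum_congr rfl fun d hd => ?_
  have hdeg : ∑ i ∈ d.support, d i = N := by
    simpa [Finsupp.weight_apply, Finsupp.sum] using hp (mem_support_iff.1 hd)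
  simp only [Pi.smul_apply, smul_eq_mul, mul_pow, Finset.prod_mul_distrib,
    Finset.prod_pow_eq_pow_sum, hdeg]
  ring

lemma hasLineDerivAt_exp_neg_norm_sq_half {E : Type*} [NormedAddCommGroup E]
    [InnerProductSpace ℝ E] (y v : E) :
    HasLineDerivAt ℝ (fun y : E => rexp (-‖y‖ ^ 2 / 2))
      (-(inner ℝ y v * rexp (-‖y‖ ^ 2 / 2))) y v := by
  have hline : HasDerivAt (fun t : ℝ => y + t • v) v 0 := by
    simpa using ((hasDerivAt_id (0 : ℝ)).smul_const v).const_add y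
  refine (hline.norm_sq.fun_neg.div_const 2).exp.congr_deriv ?_
  simp only [zero_smul, add_zero]
  ring

lemma hasLineDerivAt_eval {ι : Type*} [DecidableEq ι] (p : MvPolynomial ι ℝ) (i : ι)
    (y : EuclideanSpace ℝ ι) :
    HasLineDerivAt ℝ (fun y : EuclideanSpace ℝ ι => eval y.ofLp p) (eval y.ofLp (pderiv i p)) y
      (EuclideanSpace.single i 1) := by
  unfold HasLineDerivAt
  induction p using MvPolynomial.induction_on with
  | C a => simpa using hasDerivAt_const (0 : ℝ) a
  | add p q hp hq => simpa using hp.fun_add hq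
  | mul_X p j hp =>
    have hX : HasDerivAt (fun t : ℝ => y.ofLp j + t * (Pi.single i 1 : ι → ℝ) j)
        ((Pi.single i 1 : ι → ℝ) j) 0 := by
      simpa using ((hasDerivAt_id (0 : ℝ)).mul_const _).const_add (y.ofLp j)
    have h := hp.fun_mul hX
    simp only [zero_smul, add_zero, zero_mul] at h
    simp only [map_mul, eval_X, PiLp.add_apply, PiLp.smul_apply, smul_eq_mul,
      PiLp.ofLp_single, pderiv_mul, pderiv_X, map_add]
    refine h.congr_deriv ?_
    rw [Pi.apply_single (fun _ => eval y.ofLp) (fun _ => map_zero _), map_one]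

variable {ι : Type*} [Fintype ι]

lemma isHomogeneous_sum_X_sq :
    (∑ i, X i ^ 2 : MvPolynomial ι ℝ).IsHomogeneous 2 :=
  IsHomogeneous.sum _ _ _ fun i _ => by simpa using (isHomogeneous_X ℝ i).pow 2

lemma eval_sum_X_sq (y : EuclideanSpace ℝ ι) :
    eval y.ofLp (∑ i, X i ^ 2 : MvPolynomial ι ℝ) = ‖y‖ ^ 2 := by
  simp [EuclideanSpace.real_norm_sq_eq]

lemma integrable_eval_mul_exp (p : MvPolynomial ι ℝ) :
    Integrable fun y : EuclideanSpace ℝ ι => eval y.ofLp p * rexp (-‖y‖ ^ 2 / 2) := by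
  cases isEmpty_or_nonempty ι with
  | inl _ => exact .of_finite
  | inr _ =>
    rw [← sum_homogeneousComponent p]
    simp only [map_sum, Finset.sum_mul]
    exact integrable_finsetSum _ fun N _ => integrable_homogeneous_mul_exp volume
      ((continuous_eval _).comp (PiLp.continuous_ofLp 2 _)) fun r y =>
        eval_smul_of_isHomogeneous (homogeneousComponent_isHomogeneous N p) r y.ofLp

/-- The unnormalised expectation of a polynomial under the standard Gaussian law. -/
def gaussianIntegral : MvPolynomial ι ℝ →ₗ[ℝ] ℝ where
  toFun p := ∫ y : EuclideanSpace ℝ ι, eval y.ofLp p * rexp (-‖y‖ ^ 2 / 2)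
  map_add' p q := by
    simp only [map_add, add_mul]
    exact integral_add (integrable_eval_mul_exp p) (integrable_eval_mul_exp q)
  map_smul' c p := by
    simp only [smul_eval, mul_assoc, integral_const_mul, RingHom.id_apply, smul_eq_mul]

/-- Stein's identity. -/
lemma gaussianIntegral_X_mul (i : ι) (p : MvPolynomial ι ℝ) :
    gaussianIntegral (X i * p) = gaussianIntegral (pderiv i p) := by
  classical
  have h := integral_bilinear_hasLineDerivAt_right_eq_neg_left_of_integrable
    (μ := (volume : Measure (EuclideanSpace ℝ ι))) (B := ContinuousLinearMap.mul ℝ ℝ)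
    (f := fun y => eval y.ofLp p) (f' := fun y => eval y.ofLp (pderiv i p))
    (g := fun y => rexp (-‖y‖ ^ 2 / 2)) (g' := fun y => -(y.ofLp i * rexp (-‖y‖ ^ 2 / 2)))
    (integrable_eval_mul_exp _)
    ((integrable_eval_mul_exp (X i * p)).neg.congr (.of_forall fun y => by simp; ring))
    (integrable_eval_mul_exp _) (fun y _ => hasLineDerivAt_eval p i y)
    (fun y _ => by
      simpa [EuclideanSpace.inner_single_right] using
        hasLineDerivAt_exp_neg_norm_sq_half y (EuclideanSpace.single i 1))
  simp only [ContinuousLinearMap.mul_apply', mul_neg, integral_neg, neg_inj] at h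
  refine Eq.trans (integral_congr_ae (.of_forall fun y => ?_)) h
  simp only [map_mul, eval_X]
  ring

/-- The surface measure of the Euclidean unit sphere. -/
abbrev sphereMeasure (ι : Type*) [Fintype ι] : Measure (sphere (0 : EuclideanSpace ℝ ι) 1) :=
  (volume : Measure (EuclideanSpace ℝ ι)).toSphere

lemma gaussianIntegral_of_isHomogeneous [Nonempty ι] {p : MvPolynomial ι ℝ} {N : ℕ}
    (hp : p.IsHomogeneous N) :
    gaussianIntegral p = (∫ ω, eval ω.1.ofLp p ∂sphereMeasure ι) *
      ∫ r in Set.Ioi (0 : ℝ), r ^ (Fintype.card ι - 1 + N) * rexp (-r ^ 2 / 2) := by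
  rw [← finrank_euclideanSpace (𝕜 := ℝ) (ι := ι)]
  exact integral_homogeneous_mul_exp volume fun r y => eval_smul_of_isHomogeneous hp r y.ofLp

end PolynomialGaussian

/-! ### Measures on a bounded interval are determined by their moments -/

lemma hasSum_charFun_of_abs_le {μ : Measure ℝ} [IsFiniteMeasure μ] {C : ℝ}
    (hμ : ∀ᵐ x ∂μ, |x| ≤ C) (t : ℝ) :
    HasSum (fun k : ℕ => (t * Complex.I) ^ k / (k.factorial : ℂ) * ((∫ x, x ^ k ∂μ : ℝ) : ℂ))
      (charFun μ t) := by
  have hterm (x : ℝ) (k : ℕ) : (t * x * Complex.I) ^ k / (k.factorial : ℂ) =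
      (t * Complex.I) ^ k / (k.factorial : ℂ) * ((x ^ k : ℝ) : ℂ) := by
    push_cast
    ring
  have h := hasSum_integral_of_dominated_convergence (μ := μ)
    (F := fun (k : ℕ) (x : ℝ) => (t * Complex.I) ^ k / (k.factorial : ℂ) * ((x ^ k : ℝ) : ℂ))
    (f := fun x => Complex.exp (t * x * Complex.I))
    (fun k _ => (|t| * C) ^ k / k.factorial) (fun k => by fun_prop) (fun k => ?_)
    (.of_forall fun _ => Real.summable_pow_div_factorial (|t| * C)) (by fun_prop)
    (.of_forall fun x => ?_)
  · simpa only [charFun_apply_real, integral_const_mul, integral_complex_ofReal] using h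
  · filter_upwards [hμ] with x hx
    rw [← hterm, norm_div, norm_pow, norm_mul, norm_mul, Complex.norm_I, mul_one,
      Complex.norm_real, Complex.norm_real, Complex.norm_natCast, Real.norm_eq_abs,
      Real.norm_eq_abs]
    gcongr
  · have hexp := NormedSpace.expSeries_div_hasSum_exp (𝔸 := ℂ) (t * x * Complex.I)
    rw [← Complex.exp_eq_exp_ℂ] at hexp
    simpa only [hterm] using hexp

lemma ext_of_integral_pow {μ ν : Measure ℝ} [IsFiniteMeasure μ] [IsFiniteMeasure ν] {C D : ℝ}
    (hμ : ∀ᵐ x ∂μ, |x| ≤ C) (hν : ∀ᵐ x ∂ν, |x| ≤ D)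
    (h : ∀ k : ℕ, ∫ x, x ^ k ∂μ = ∫ x, x ^ k ∂ν) : μ = ν := by
  refine Measure.ext_of_charFun (funext fun t => ?_)
  have hsum := hasSum_charFun_of_abs_le hμ t
  simp only [h] at hsum
  exact hsum.unique (hasSum_charFun_of_abs_le hν t)

lemma integral_pow_Icc_neg_one_one (k : ℕ) :
    ∫ u in Set.Icc (-1 : ℝ) 1, u ^ k = (1 - (-1) ^ (k + 1)) / (k + 1) := by
  rw [integral_Icc_eq_integral_Ioc, ← intervalIntegral.integral_of_le (by norm_num), integral_pow,
    one_pow]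

lemma eq_smul_restrict_Icc_of_integral_pow {μ : Measure ℝ} [IsFiniteMeasure μ] {C : ℝ}
    (hC : ∀ᵐ x ∂μ, |x| ≤ C) (hone : ∫ x, x ∂μ = 0)
    (hrec : ∀ k : ℕ, (k + 3) * ∫ x, x ^ (k + 2) ∂μ = (k + 1) * ∫ x, x ^ k ∂μ) :
    μ = (μ Set.univ / 2) • volume.restrict (Set.Icc (-1 : ℝ) 1) := by
  have hfin : μ Set.univ / 2 ≠ ∞ := ENNReal.div_ne_top (measure_ne_top μ _) two_ne_zero
  have : IsFiniteMeasure ((μ Set.univ / 2) • volume.restrict (Set.Icc (-1 : ℝ) 1)) :=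
    Measure.smul_finite _ hfin
  refine ext_of_integral_pow (D := 1) hC (Measure.ae_smul_measure ?_ _) fun k => ?_
  · filter_upwards [ae_restrict_mem measurableSet_Icc] with x hx using abs_le.2 hx
  rw [integral_smul_measure, integral_pow_Icc_neg_one_one, ENNReal.toReal_div, smul_eq_mul,
    ENNReal.toReal_ofNat, ← measureReal_def]
  induction k using Nat.twoStepInduction with
  | zero => simp; ring
  | one => simp [hone]
  | more k ih _ =>
    have hk := hrec k
    rw [ih] at hk
    push_cast
    have : (k : ℝ) + 3 ≠ 0 := by positivity
    refine mul_left_cancel₀ this (hk.trans ?_)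
    rw [show (k : ℝ) + 2 + 1 = k + 3 by ring]
    field_simp
    ring

/-! ### Cartan–Münzner polynomials -/

section CartanMunzner

open MvPolynomial Metric

variable {ι : Type*} [Fintype ι]

lemma gaussianIntegral_pow_mul_pow [Nonempty ι] {F : MvPolynomial ι ℝ} {g : ℕ}
    (hF : F.IsHomogeneous g) (k N : ℕ) :
    gaussianIntegral (F ^ k * (∑ i, X i ^ 2) ^ N) =
      (∫ ω, eval ω.1.ofLp F ^ k ∂sphereMeasure ι) *
      ∫ r in Set.Ioi (0 : ℝ), r ^ (Fintype.card ι - 1 + (g * k + 2 * N)) * rexp (-r ^ 2 / 2) := by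
  rw [gaussianIntegral_of_isHomogeneous ((hF.pow k).mul (isHomogeneous_sum_X_sq.pow N))]
  simp only [map_mul, map_pow, eval_sum_X_sq, norm_eq_of_mem_sphere, one_pow, mul_one]

/-- A Cartan–Münzner polynomial of degree `g` for an isoparametric family on the sphere whose two
multiplicities agree, so that its Laplacian vanishes. -/
structure IsCartanMunzner (F : MvPolynomial ι ℝ) (g : ℕ) : Prop where
  isHomogeneous : F.IsHomogeneous g
  sum_pderiv_sq : ∑ i, pderiv i F ^ 2 = (g : MvPolynomial ι ℝ) ^ 2 * (∑ i, X i ^ 2) ^ (g - 1)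
  sum_pderiv_pderiv : ∑ i, pderiv i (pderiv i F) = 0

namespace IsCartanMunzner

variable {F : MvPolynomial ι ℝ} {g : ℕ}

/-- Stein's identity for the vector field `F ^ k ∇F`. -/
lemma gaussianIntegral_pow_succ (hF : IsCartanMunzner F g) (hg : g ≠ 0) (k : ℕ) :
    gaussianIntegral (F ^ (k + 1)) =
      k * g * gaussianIntegral (F ^ (k - 1) * (∑ i, X i ^ 2) ^ (g - 1)) := by
  have heuler : (g : ℝ) * gaussianIntegral (F ^ (k + 1)) =
      ∑ i, gaussianIntegral (X i * (F ^ k * pderiv i F)) := by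
    rw [← map_sum, ← nsmul_eq_mul, ← map_nsmul, pow_succ, ← mul_smul_comm,
      ← hF.isHomogeneous.sum_X_mul_pderiv, Finset.mul_sum]
    simp only [mul_left_comm]
  have hdiv : ∑ i, pderiv i (F ^ k * pderiv i F) =
      (k * g ^ 2) • (F ^ (k - 1) * (∑ i, X i ^ 2) ^ (g - 1)) := by
    simp only [pderiv_mul, pderiv_pow, Finset.sum_add_distrib, ← Finset.mul_sum,
      hF.sum_pderiv_pderiv, mul_assoc, ← sq, hF.sum_pderiv_sq, nsmul_eq_mul]
    push_cast
    ring
  have hg' : (g : ℝ) ≠ 0 := Nat.cast_ne_zero.2 hg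
  simp only [gaussianIntegral_X_mul] at heuler
  rw [← map_sum, hdiv, map_nsmul, nsmul_eq_mul] at heuler
  refine mul_left_cancel₀ hg' (heuler.trans ?_)
  push_cast
  ring

lemma integral_eval_sphere [Nonempty ι] (hF : IsCartanMunzner F g) (hg : g ≠ 0) :
    ∫ ω, eval ω.1.ofLp F ∂sphereMeasure ι = 0 := by
  have h := hF.gaussianIntegral_pow_succ hg 0
  rw [zero_add, ← mul_one (F ^ 1), ← pow_zero (∑ i, X i ^ 2),
    gaussianIntegral_pow_mul_pow hF.isHomogeneous, Nat.cast_zero, zero_mul, zero_mul,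
    mul_eq_zero] at h
  simpa using h.resolve_right (integral_Ioi_pow_mul_exp_neg_sq_half_pos _).ne'

lemma integral_eval_pow_add_two_sphere [Nonempty ι] (hF : IsCartanMunzner F g) (hg : g ≠ 0)
    (k : ℕ) :
    (Fintype.card ι + g * k + 2 * (g - 1)) * ∫ ω, eval ω.1.ofLp F ^ (k + 2) ∂sphereMeasure ι =
      (k + 1) * g * ∫ ω, eval ω.1.ofLp F ^ k ∂sphereMeasure ι := by
  obtain ⟨d, rfl⟩ := Nat.exists_eq_succ_of_ne_zero hg
  obtain ⟨n, hn⟩ := Nat.exists_eq_succ_of_ne_zero (Fintype.card_ne_zero (α := ι))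
  have h := hF.gaussianIntegral_pow_succ hg (k + 1)
  rw [← mul_one (F ^ (k + 1 + 1)), ← pow_zero (∑ i, X i ^ 2),
    gaussianIntegral_pow_mul_pow hF.isHomogeneous, gaussianIntegral_pow_mul_pow hF.isHomogeneous,
    hn] at h
  have hpos := integral_Ioi_pow_mul_exp_neg_sq_half_pos (n + ((d + 1) * k + 2 * d))
  have hrec := integral_Ioi_pow_add_two_mul_exp_neg_sq_half (n + ((d + 1) * k + 2 * d))
  rw [show n + ((d + 1) * k + 2 * d) + 2 = n + (d + 1) * (k + 2) by ring] at hrec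
  simp only [Nat.succ_eq_add_one, Nat.add_sub_cancel, mul_zero, add_zero, hrec] at h
  rw [hn]
  push_cast at h ⊢
  refine mul_right_cancel₀ hpos.ne' ?_
  linear_combination h

/-- Archimedes' theorem on the projection of the sphere `S²` to an axis is the case `g = 1`. -/
theorem map_eval_sphereMeasure (hF : IsCartanMunzner F g) (hg : g ≠ 0)
    (hcard : Fintype.card ι = g + 2) :
    (sphereMeasure ι).map (fun ω => eval ω.1.ofLp F) =
      (sphereMeasure ι Set.univ / 2) • volume.restrict (Set.Icc (-1 : ℝ) 1) := by
  have : Nonempty ι := Fintype.card_pos_iff.1 (by lia)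
  have hcont : Continuous fun ω : sphere (0 : EuclideanSpace ℝ ι) 1 => eval ω.1.ofLp F :=
    (continuous_eval F).comp ((PiLp.continuous_ofLp 2 _).comp continuous_subtype_val)
  obtain ⟨C, hC⟩ := isCompact_univ.exists_bound_of_continuousOn hcont.continuousOn
  have hmoment (k : ℕ) := integral_map (μ := sphereMeasure ι)
    hcont.measurable.aemeasurable (f := fun x => x ^ k) (by fun_prop)
  have h := eq_smul_restrict_Icc_of_integral_pow (C := C)
    (μ := (sphereMeasure ι).map fun ω => eval ω.1.ofLp F) ?_ ?_ fun k => ?_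
  · rwa [Measure.map_apply hcont.measurable .univ, Set.preimage_univ] at h
  · exact (ae_map_iff hcont.measurable.aemeasurable
      (measurableSet_le (by fun_prop) (by fun_prop))).2 (.of_forall fun ω => hC ω trivial)
  · simpa using (hmoment 1).trans (by simpa using hF.integral_eval_sphere hg)
  · have hg' : (g : ℝ) ≠ 0 := Nat.cast_ne_zero.2 hg
    have hk := hF.integral_eval_pow_add_two_sphere hg k
    rw [hcard] at hk
    push_cast at hk
    rw [hmoment, hmoment]
    refine mul_left_cancel₀ hg' ?_
    linear_combination hk

end IsCartanMunzner

end CartanMunzner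

/-! ### The standard Gaussian measure in polar coordinates -/

section StdGaussianDensity

open Module

variable {E : Type*} [NormedAddCommGroup E] [InnerProductSpace ℝ E] [FiniteDimensional ℝ E]
  [MeasurableSpace E] [BorelSpace E]

variable (E) in
lemma integral_exp_neg_norm_sq_half :
    ∫ y : E, rexp (-‖y‖ ^ 2 / 2) = (2 * π) ^ (finrank ℝ E / 2 : ℝ) := by
  have h := GaussianFourier.integral_rexp_neg_mul_sq_norm (V := E) (b := 1 / 2) (by norm_num)
  rw [show π / (1 / 2) = 2 * π by ring] at h
  rw [← h]
  congr! 3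
  ring

variable (E) in
lemma integrable_exp_neg_norm_sq_half : Integrable fun y : E => rexp (-‖y‖ ^ 2 / 2) := by
  refine .of_integral_ne_zero ?_
  rw [integral_exp_neg_norm_sq_half]
  positivity

lemma integral_exp_neg_norm_sq_half_mul_cexp_inner (t : E) :
    ∫ y : E, (rexp (-‖y‖ ^ 2 / 2) : ℂ) * Complex.exp (inner ℝ y t * Complex.I) =
      ((2 * π) ^ (finrank ℝ E / 2 : ℝ) : ℝ) * Complex.exp (-‖t‖ ^ 2 / 2) := by
  have h := GaussianFourier.integral_cexp_neg_mul_sq_norm_add (V := E)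
    (b := 1 / 2) (by norm_num) Complex.I t
  have hweight (y : E) :
      (rexp (-‖y‖ ^ 2 / 2) : ℂ) = Complex.exp (-(1 / 2) * (‖y‖ : ℂ) ^ 2) := by
    push_cast
    ring_nf
  rw [← GaussianFourier.integral_cexp_neg_mul_sq_norm (by norm_num),
    show Complex.I ^ 2 * (‖t‖ : ℂ) ^ 2 / (4 * (1 / 2)) = -‖t‖ ^ 2 / 2 by
      rw [Complex.I_sq]
      ring] at h
  simp only [← integral_exp_neg_norm_sq_half, ← integral_complex_ofReal, hweight,
    ← Complex.exp_add, mul_comm _ Complex.I, real_inner_comm t]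
  exact h

variable (E) in
lemma stdGaussian_eq_withDensity :
    stdGaussian E = volume.withDensity fun y =>
      ENNReal.ofReal (rexp (-‖y‖ ^ 2 / 2) / (2 * π) ^ (finrank ℝ E / 2 : ℝ)) := by
  have : IsFiniteMeasure ((volume : Measure E).withDensity fun y =>
      ENNReal.ofReal (rexp (-‖y‖ ^ 2 / 2) / (2 * π) ^ (finrank ℝ E / 2 : ℝ))) :=
    isFiniteMeasure_withDensity_ofReal ((integrable_exp_neg_norm_sq_half E).div_const _).2
  have hC : (((2 * π) ^ (finrank ℝ E / 2 : ℝ) : ℝ) : ℂ) ≠ 0 :=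
    Complex.ofReal_ne_zero.2 (by positivity)
  refine Measure.ext_of_charFun (funext fun t => ?_)
  rw [charFun_stdGaussian, charFun_apply,
    integral_withDensity_eq_integral_toReal_smul (by fun_prop) (by simp),
    ← mul_div_cancel_left₀ (Complex.exp (-‖t‖ ^ 2 / 2)) hC,
    ← integral_exp_neg_norm_sq_half_mul_cexp_inner, ← integral_div]
  refine integral_congr_ae (.of_forall fun y => ?_)
  simp only [ENNReal.toReal_ofReal (show 0 ≤ rexp (-‖y‖ ^ 2 / 2) /
    (2 * π) ^ (finrank ℝ E / 2 : ℝ) by positivity), Complex.real_smul, Complex.ofReal_div]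
  ring

lemma stdGaussian_absolutelyContinuous : stdGaussian E ≪ volume := by
  rw [stdGaussian_eq_withDensity]
  exact withDensity_absolutelyContinuous _ _

lemma stdGaussian_real_apply {K : Set E} (hK : MeasurableSet K) :
    (stdGaussian E).real K =
      (∫ y in K, rexp (-‖y‖ ^ 2 / 2)) / (2 * π) ^ (finrank ℝ E / 2 : ℝ) := by
  rw [stdGaussian_eq_withDensity, measureReal_def, withDensity_apply _ hK,
    ← ofReal_integral_eq_lintegral_ofReal
      ((integrable_exp_neg_norm_sq_half E).div_const _).integrableOn
      (.of_forall fun y => by positivity),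
    ENNReal.toReal_ofReal (by positivity), integral_div]

end StdGaussianDensity

section GaussianPolar

open Module Metric

variable {E : Type*} [NormedAddCommGroup E] [NormedSpace ℝ E] [FiniteDimensional ℝ E]
  [Nontrivial E] [MeasurableSpace E] [BorelSpace E] (μ : Measure E) [μ.IsAddHaarMeasure]

lemma setIntegral_exp_neg_norm_sq_half {K : Set E} (hK : MeasurableSet K) :
    ∫ y in K, rexp (-‖y‖ ^ 2 / 2) ∂μ = ∫ r in Set.Ioi (0 : ℝ), r ^ (finrank ℝ E - 1) *
      (μ.toSphere.real {ω | r • (ω : E) ∈ K} * rexp (-r ^ 2 / 2)) := by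
  classical
  have hint : Integrable (K.indicator fun y => rexp (-‖y‖ ^ 2 / 2)) μ := by
    refine Integrable.indicator ?_ hK
    simpa using integrable_homogeneous_mul_exp (f := fun _ => 1) (N := 0) μ (by fun_prop) (by simp)
  have hpolar := measurePreserving_smul_sphere μ
  have hslice (ω : sphere (0 : E) 1) (r : ℝ) :
      K.indicator (fun y => rexp (-‖y‖ ^ 2 / 2)) (r • (ω : E)) =
        {ω : sphere (0 : E) 1 | r • (ω : E) ∈ K}.indicator (fun _ => rexp (-r ^ 2 / 2)) ω := by
    simp only [Set.indicator_apply, Set.mem_ofPred_eq, norm_smul, norm_eq_of_mem_sphere, mul_one,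
      Real.norm_eq_abs, sq_abs]
  rw [← integral_indicator hK, ← hpolar.integral_comp measurableEmbedding_smul_sphere,
    integral_prod_symm (fun p => K.indicator (fun y => rexp (-‖y‖ ^ 2 / 2)) _)
      ((hpolar.integrable_comp_emb measurableEmbedding_smul_sphere).2 hint),
    ← integral_volumeIoiPow]
  simp only [hslice]
  refine integral_congr_ae (.of_forall fun r => ?_)
  have hmeas : MeasurableSet {ω : sphere (0 : E) 1 | (r : ℝ) • (ω : E) ∈ K} :=
    hK.preimage (by fun_prop)
  exact integral_indicator_const _ hmeas

end GaussianPolar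

namespace IsCartanMunzner

open MvPolynomial Metric

variable {ι : Type*} [Fintype ι] {F : MvPolynomial ι ℝ} {g : ℕ}

lemma sphereMeasure_real_preimage (hF : IsCartanMunzner F g) (hg : g ≠ 0)
    (hcard : Fintype.card ι = g + 2) {T : Set ℝ} (hT : MeasurableSet T) :
    (sphereMeasure ι).real {ω | eval ω.1.ofLp F ∈ T} =
      (sphereMeasure ι).real Set.univ / 2 * volume.real (T ∩ Set.Icc (-1) 1) := by
  have hcont : Continuous fun ω : sphere (0 : EuclideanSpace ℝ ι) 1 => eval ω.1.ofLp F :=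
    (continuous_eval F).comp ((PiLp.continuous_ofLp 2 _).comp continuous_subtype_val)
  have h := congrArg (fun μ => (μ T).toReal) (hF.map_eval_sphereMeasure hg hcard)
  rw [Measure.map_apply hcont.measurable hT] at h
  refine h.trans ?_
  rw [Measure.smul_apply, Measure.restrict_apply hT, smul_eq_mul, ENNReal.toReal_mul,
    ENNReal.toReal_div, ENNReal.toReal_ofNat]
  rfl

theorem stdGaussian_real_mul (hF : IsCartanMunzner F g) (hg : g ≠ 0)
    (hcard : Fintype.card ι = g + 2) {K : Set (EuclideanSpace ℝ ι)} (hK : MeasurableSet K)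
    {T : ℝ → Set ℝ} (hT : ∀ r, MeasurableSet (T r))
    (hKT : ∀ r, 0 < r → ∀ ω : sphere (0 : EuclideanSpace ℝ ι) 1,
      r • (ω : EuclideanSpace ℝ ι) ∈ K ↔ eval ω.1.ofLp F ∈ T r) :
    (stdGaussian (EuclideanSpace ℝ ι)).real K *
        (2 * ∫ r in Set.Ioi (0 : ℝ), r ^ (g + 1) * rexp (-r ^ 2 / 2)) =
      ∫ r in Set.Ioi (0 : ℝ),
        r ^ (g + 1) * volume.real (T r ∩ Set.Icc (-1) 1) * rexp (-r ^ 2 / 2) := by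
  have : Nonempty ι := Fintype.card_pos_iff.1 (by lia)
  have hdim : Module.finrank ℝ (EuclideanSpace ℝ ι) - 1 = g + 1 := by
    rw [finrank_euclideanSpace, hcard, Nat.add_sub_assoc (by norm_num)]
  set s := (sphereMeasure ι).real Set.univ
  have htotal : (2 * π) ^ (Module.finrank ℝ (EuclideanSpace ℝ ι) / 2 : ℝ) =
      s * ∫ r in Set.Ioi (0 : ℝ), r ^ (g + 1) * rexp (-r ^ 2 / 2) := by
    have h := integral_homogeneous_mul_exp (f := fun _ => 1) (N := 0)
      (volume : Measure (EuclideanSpace ℝ ι)) (by simp)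
    simpa only [integral_exp_neg_norm_sq_half, one_mul, hdim, add_zero, integral_const,
      smul_eq_mul, mul_one] using h
  have hball : ∫ y in K, rexp (-‖y‖ ^ 2 / 2) = s / 2 * ∫ r in Set.Ioi (0 : ℝ),
      r ^ (g + 1) * volume.real (T r ∩ Set.Icc (-1) 1) * rexp (-r ^ 2 / 2) := by
    rw [setIntegral_exp_neg_norm_sq_half volume hK, hdim, ← integral_const_mul]
    refine setIntegral_congr_fun measurableSet_Ioi fun r hr => ?_
    simp only [hKT r hr, hF.sphereMeasure_real_preimage hg hcard (hT r)]
    ring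
  have hpos : 0 < (2 * π) ^ (Module.finrank ℝ (EuclideanSpace ℝ ι) / 2 : ℝ) := by positivity
  rw [htotal] at hpos
  rw [stdGaussian_real_apply hK, htotal, hball, div_mul_eq_mul_div, div_eq_iff hpos.ne']
  ring

end IsCartanMunzner

/-! ### Traceless symmetric `3 × 3` matrices and Cartan's cubic -/

section Cartan

open MvPolynomial

/-- The parametrization by `ℝ⁵` of the traceless symmetric `3 × 3` matrices that is an isometry
up to the factor `√(3 / 2)` for the Frobenius norm. -/
def tracelessSymm : EuclideanSpace ℝ (Fin 5) →ₗ[ℝ] Matrix (Fin 3) (Fin 3) ℝ where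
  toFun y :=
    !![-y 0 / 2 + √3 / 2 * y 1, √3 / 2 * y 2, √3 / 2 * y 3;
      √3 / 2 * y 2, -y 0 / 2 - √3 / 2 * y 1, √3 / 2 * y 4;
      √3 / 2 * y 3, √3 / 2 * y 4, y 0]
  map_add' y z := by
    ext i j
    fin_cases i <;> fin_cases j <;> simp <;> ring
  map_smul' c y := by
    ext i j
    fin_cases i <;> fin_cases j <;> simp <;> ring

lemma tracelessSymm_apply (y : EuclideanSpace ℝ (Fin 5)) :
    tracelessSymm y =
      !![-y 0 / 2 + √3 / 2 * y 1, √3 / 2 * y 2, √3 / 2 * y 3;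
        √3 / 2 * y 2, -y 0 / 2 - √3 / 2 * y 1, √3 / 2 * y 4;
        √3 / 2 * y 3, √3 / 2 * y 4, y 0] := rfl

lemma isHermitian_tracelessSymm (y : EuclideanSpace ℝ (Fin 5)) :
    (tracelessSymm y).IsHermitian := by
  ext i j
  fin_cases i <;> fin_cases j <;> simp [tracelessSymm_apply]

lemma trace_tracelessSymm (y : EuclideanSpace ℝ (Fin 5)) : (tracelessSymm y).trace = 0 := by
  simp only [tracelessSymm_apply, trace_fin_three, Matrix.of_apply, Matrix.cons_val]
  ring

lemma trace_tracelessSymm_mul_self (y : EuclideanSpace ℝ (Fin 5)) :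
    (tracelessSymm y * tracelessSymm y).trace = 3 / 2 * ‖y‖ ^ 2 := by
  have h : √3 ^ 2 = 3 := Real.sq_sqrt (by norm_num)
  simp only [EuclideanSpace.real_norm_sq_eq, tracelessSymm_apply, trace_fin_three,
    Matrix.mul_apply, Fin.sum_univ_three, Matrix.of_apply, Matrix.cons_val, Fin.sum_univ_five]
  linear_combination (y 1 ^ 2 + y 2 ^ 2 + y 3 ^ 2 + y 4 ^ 2) / 2 * h

/-- Cartan's isoparametric cubic form on `ℝ⁵`. -/
def cartanCubic : MvPolynomial (Fin 5) ℝ :=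
  X 0 ^ 3 - C 3 * (X 0 * (X 1 ^ 2 + X 2 ^ 2)) + C (3 / 2) * (X 0 * (X 3 ^ 2 + X 4 ^ 2)) +
    C (3 / 2 * √3) * (X 1 * (X 3 ^ 2 - X 4 ^ 2)) + C (3 * √3) * (X 2 * X 3 * X 4)

lemma eval_cartanCubic (y : EuclideanSpace ℝ (Fin 5)) :
    eval y.ofLp cartanCubic = 4 * (tracelessSymm y).det := by
  have h : √3 ^ 2 = 3 := Real.sq_sqrt (by norm_num)
  simp only [cartanCubic, tracelessSymm_apply, det_fin_three, Matrix.of_apply, Matrix.cons_val,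
    map_add, map_sub, map_mul, map_pow, eval_X, eval_C]
  grind

lemma isHomogeneous_cartanCubic : cartanCubic.IsHomogeneous 3 := by
  have hX (i : Fin 5) : (X i : MvPolynomial (Fin 5) ℝ).IsHomogeneous 1 := isHomogeneous_X ℝ i
  have hC (c : ℝ) : (C c : MvPolynomial (Fin 5) ℝ).IsHomogeneous 0 := isHomogeneous_C _ c
  have hsq (i : Fin 5) : (X i ^ 2 : MvPolynomial (Fin 5) ℝ).IsHomogeneous 2 := (hX i).pow 2
  exact (((((hX 0).pow 3).sub ((hC _).mul ((hX 0).mul ((hsq 1).add (hsq 2))))).add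
    ((hC _).mul ((hX 0).mul ((hsq 3).add (hsq 4))))).add
    ((hC _).mul ((hX 1).mul ((hsq 3).sub (hsq 4))))).add
    ((hC _).mul (((hX 2).mul (hX 3)).mul (hX 4)))

theorem isCartanMunzner_cartanCubic : IsCartanMunzner cartanCubic 3 where
  isHomogeneous := isHomogeneous_cartanCubic
  sum_pderiv_sq := by
    refine MvPolynomial.funext fun y => ?_
    have h : √3 ^ 2 = 3 := Real.sq_sqrt (by norm_num)
    simp only [cartanCubic, map_add, map_sub, Derivation.leibniz_pow, pderiv_X, smul_eq_mul,
      nsmul_eq_mul, Nat.cast_ofNat, Derivation.leibniz, derivation_C, Fin.sum_univ_five,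
      Pi.single_apply, Fin.reduceEq, if_true, if_false, mul_zero, mul_one, add_zero, zero_add,
      sub_zero, zero_sub, map_pow, map_mul, eval_X, eval_C, map_neg, eval_ofNat]
    grind
  sum_pderiv_pderiv := by
    refine MvPolynomial.funext fun y => ?_
    have hnum (i : Fin 5) (k : ℕ) [k.AtLeastTwo] :
        pderiv i (OfNat.ofNat k : MvPolynomial (Fin 5) ℝ) = 0 := Derivation.map_natCast _ k
    simp only [hnum, cartanCubic, map_add, map_sub, Derivation.leibniz_pow, pderiv_X,
      smul_eq_mul, nsmul_eq_mul, Nat.cast_ofNat, Derivation.leibniz, derivation_C,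
      Fin.sum_univ_five, Pi.single_apply, Fin.reduceEq, if_true, if_false, mul_zero, mul_one,
      add_zero, zero_add, sub_zero, zero_sub, Derivation.map_one_eq_zero, map_zero, map_mul,
      eval_X, eval_C, eval_ofNat, map_neg, Nat.reduceSub, pow_one, map_one]
    ring

end Cartan

/-! ### Numerical radius of real symmetric matrices -/

section NumericalRadius

/-- The real matrices of numerical radius at most `a`, i.e. those whose quadratic form is bounded
by `a` in absolute value on the unit sphere. -/
def numericalRadiusBall (n : Type*) [Fintype n] (a : ℝ) : Set (Matrix n n ℝ) :=
  {A | ∀ v : n → ℝ, ∑ i, v i ^ 2 = 1 → |v ⬝ᵥ A *ᵥ v| ≤ a}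

variable {n : Type*} [Fintype n]

lemma isClosed_numericalRadiusBall (a : ℝ) : IsClosed (numericalRadiusBall n a) := by
  simp only [numericalRadiusBall, Set.ofPred_forall]
  exact isClosed_iInter fun v => isClosed_iInter fun _ =>
    isClosed_le (by fun_prop) continuous_const

lemma convex_numericalRadiusBall (a : ℝ) : Convex ℝ (numericalRadiusBall n a) := by
  intro A hA B hB s t hs ht hst v hv
  have h (C : Matrix n n ℝ) {r : ℝ} (hr : 0 ≤ r) (hC : C ∈ numericalRadiusBall n a) :
      |r * (v ⬝ᵥ C *ᵥ v)| ≤ r * a := by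
    rw [abs_mul, abs_of_nonneg hr]
    exact mul_le_mul_of_nonneg_left (hC v hv) hr
  simp only [add_mulVec, smul_mulVec, dotProduct_add, dotProduct_smul, smul_eq_mul]
  calc |s * (v ⬝ᵥ A *ᵥ v) + t * (v ⬝ᵥ B *ᵥ v)| ≤ s * a + t * a :=
        (abs_add_le _ _).trans (add_le_add (h A hs hA) (h B ht hB))
    _ = a := by rw [← add_mul, hst, one_mul]

lemma smul_mem_numericalRadiusBall_iff {c : ℝ} (hc : 0 < c) {a : ℝ} {A : Matrix n n ℝ} :
    c • A ∈ numericalRadiusBall n (c * a) ↔ A ∈ numericalRadiusBall n a := by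
  refine forall₂_congr fun v _ => ?_
  rw [smul_mulVec, dotProduct_smul, smul_eq_mul, abs_mul, abs_of_pos hc, mul_le_mul_iff_right₀ hc]

variable [DecidableEq n] {A : Matrix n n ℝ}

lemma trace_mul_self_eq_sum_eigenvalues_sq (hA : A.IsHermitian) :
    (A * A).trace = ∑ i, hA.eigenvalues i ^ 2 := by
  conv_lhs => rw [hA.spectral_theorem, ← map_mul, Unitary.conjStarAlgAut_apply, trace_mul_cycle,
    Unitary.coe_star_mul_self, Matrix.one_mul, diagonal_mul_diagonal, trace_diagonal]
  simp [sq]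

lemma dotProduct_mulVec_eq_sum_eigenvalues (hA : A.IsHermitian) (v : n → ℝ) :
    v ⬝ᵥ A *ᵥ v =
      ∑ i, hA.eigenvalues i * inner ℝ (WithLp.toLp 2 v) (hA.eigenvectorBasis i) ^ 2 := by
  have hinner (x : EuclideanSpace ℝ n) (w : n → ℝ) : inner ℝ x (WithLp.toLp 2 w) = w ⬝ᵥ x.ofLp := by
    simp [EuclideanSpace.inner_eq_star_dotProduct]
  have hAv (i : n) : inner ℝ (hA.eigenvectorBasis i) (WithLp.toLp 2 (A *ᵥ v)) =
      hA.eigenvalues i * inner ℝ (WithLp.toLp 2 v) (hA.eigenvectorBasis i) := by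
    have hAT : Aᵀ = A := by simpa using hA.eq
    rw [hinner, ← vecMul_transpose, hAT, ← dotProduct_mulVec, hA.mulVec_eigenvectorBasis,
      dotProduct_smul, smul_eq_mul, real_inner_comm, hinner]
  calc v ⬝ᵥ A *ᵥ v = inner ℝ (WithLp.toLp 2 v) (WithLp.toLp 2 (A *ᵥ v)) := by
        rw [hinner, dotProduct_comm]
    _ = _ := by
        rw [← hA.eigenvectorBasis.sum_inner_mul_inner]
        exact Finset.sum_congr rfl fun i _ => by rw [hAv]; ring

lemma mem_numericalRadiusBall_iff_eigenvalues (hA : A.IsHermitian) {a : ℝ} :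
    A ∈ numericalRadiusBall n a ↔ ∀ i, |hA.eigenvalues i| ≤ a := by
  refine ⟨fun h i => ?_, fun h v hv => ?_⟩
  · have hunit : ∑ j, (hA.eigenvectorBasis i).ofLp j ^ 2 = 1 := by
      rw [← EuclideanSpace.real_norm_sq_eq, hA.eigenvectorBasis.norm_eq_one, one_pow]
    simpa [hA.eigenvalues_eq i] using h _ hunit
  · have hunit : ∑ i, inner ℝ (WithLp.toLp 2 v) (hA.eigenvectorBasis i) ^ 2 = 1 := by
      have := hA.eigenvectorBasis.sum_sq_norm_inner_left (WithLp.toLp 2 v)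
      simp only [Real.norm_eq_abs, sq_abs, EuclideanSpace.real_norm_sq_eq] at this
      rw [this, hv]
    rw [dotProduct_mulVec_eq_sum_eigenvalues hA]
    calc |∑ i, hA.eigenvalues i * inner ℝ (WithLp.toLp 2 v) (hA.eigenvectorBasis i) ^ 2|
        ≤ ∑ i, a * inner ℝ (WithLp.toLp 2 v) (hA.eigenvectorBasis i) ^ 2 := by
          refine (Finset.abs_sum_le_sum_abs _ _).trans (Finset.sum_le_sum fun i _ => ?_)
          rw [abs_mul, abs_sq]
          exact mul_le_mul_of_nonneg_right (h i) (sq_nonneg _)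
      _ = a := by rw [← Finset.mul_sum, hunit, mul_one]

end NumericalRadius

section TracelessThree

lemma le_of_cubic_nonneg {a x y z : ℝ} (ha : 0 < a) (hsum : x + y + z = 0)
    (hsub : 0 ≤ (a - x) * (a - y) * (a - z)) (hadd : 0 ≤ (a + x) * (a + y) * (a + z)) :
    x ≤ a := by
  by_contra! hx
  have hyz : a ≤ y ∨ a ≤ z := by
    by_contra! h
    nlinarith [mul_pos (mul_pos (sub_pos.2 hx) (sub_pos.2 h.1)) (sub_pos.2 h.2)]
  rcases hyz with hy | hz
  · nlinarith [mul_pos (add_pos ha (ha.trans hx)) (add_pos ha (ha.trans_le hy))]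
  · nlinarith [mul_pos (add_pos ha (ha.trans hx)) (add_pos ha (ha.trans_le hz))]

lemma abs_le_of_cubic_nonneg {a x y z : ℝ} (ha : 0 < a) (hsum : x + y + z = 0)
    (hsub : 0 ≤ (a - x) * (a - y) * (a - z)) (hadd : 0 ≤ (a + x) * (a + y) * (a + z)) :
    |x| ≤ a := by
  refine abs_le'.2 ⟨le_of_cubic_nonneg ha hsum hsub hadd, ?_⟩
  refine le_of_cubic_nonneg (y := -y) (z := -z) ha (by linarith) ?_ ?_
  · simpa only [sub_neg_eq_add] using hadd
  · simpa only [← sub_eq_add_neg] using hsub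

-- With `e₁ = x + y + z = 0`, the bound says that `∏ (a - x)` and `∏ (a + x)` are nonnegative.
lemma abs_le_iff_abs_mul_le_of_add_eq_zero {a x y z : ℝ} (ha : 0 < a) (hsum : x + y + z = 0) :
    (|x| ≤ a ∧ |y| ≤ a ∧ |z| ≤ a) ↔
      |x * y * z| ≤ a ^ 3 - a / 2 * (x ^ 2 + y ^ 2 + z ^ 2) := by
  have hz : z = -x - y := by linarith
  have hsub : x * y * z ≤ a ^ 3 - a / 2 * (x ^ 2 + y ^ 2 + z ^ 2) ↔
      0 ≤ (a - x) * (a - y) * (a - z) := by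
    rw [← sub_nonneg, hz]; ring_nf
  have hadd : -(x * y * z) ≤ a ^ 3 - a / 2 * (x ^ 2 + y ^ 2 + z ^ 2) ↔
      0 ≤ (a + x) * (a + y) * (a + z) := by
    rw [← sub_nonneg, hz]; ring_nf
  rw [abs_le' (a := x * y * z), hsub, hadd]
  constructor
  · simp only [abs_le']
    rintro ⟨⟨hx, hx'⟩, ⟨hy, hy'⟩, hz, hz'⟩
    exact ⟨mul_nonneg (mul_nonneg (by linarith) (by linarith)) (by linarith),
      mul_nonneg (mul_nonneg (by linarith) (by linarith)) (by linarith)⟩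
  · rintro ⟨hs, ht⟩
    exact ⟨abs_le_of_cubic_nonneg ha hsum hs ht,
      abs_le_of_cubic_nonneg ha (y := x) (z := z) (by linarith) (by linarith) (by linarith),
      abs_le_of_cubic_nonneg ha (y := x) (z := y) (by linarith) (by linarith) (by linarith)⟩

lemma mem_numericalRadiusBall_iff_det {A : Matrix (Fin 3) (Fin 3) ℝ} (hA : A.IsHermitian)
    (htr : A.trace = 0) {a : ℝ} (ha : 0 < a) :
    A ∈ numericalRadiusBall (Fin 3) a ↔ |A.det| ≤ a ^ 3 - a / 2 * (A * A).trace := by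
  have hsum := hA.trace_eq_sum_eigenvalues
  rw [htr, Fin.sum_univ_three] at hsum
  have hiff := abs_le_iff_abs_mul_le_of_add_eq_zero ha hsum.symm
  rw [mem_numericalRadiusBall_iff_eigenvalues hA, hA.det_eq_prod_eigenvalues,
    trace_mul_self_eq_sum_eigenvalues_sq hA]
  simpa [Fin.forall_fin_succ, Fin.prod_univ_three, Fin.sum_univ_three] using hiff

/-- The points of `ℝ⁵` parametrizing the traceless symmetric matrices whose eigenvalues are at most
`a` in absolute value. -/
def spectralBall (a : ℝ) : Set (EuclideanSpace ℝ (Fin 5)) :=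
  tracelessSymm ⁻¹' numericalRadiusBall (Fin 3) a

lemma isClosed_spectralBall (a : ℝ) : IsClosed (spectralBall a) :=
  (isClosed_numericalRadiusBall a).preimage tracelessSymm.continuous_of_finiteDimensional

lemma convex_spectralBall (a : ℝ) : Convex ℝ (spectralBall a) :=
  (convex_numericalRadiusBall a).linear_preimage tracelessSymm

lemma mem_spectralBall_iff {a : ℝ} (ha : 0 < a) (y : EuclideanSpace ℝ (Fin 5)) :
    y ∈ spectralBall a ↔
      |MvPolynomial.eval y.ofLp cartanCubic| ≤ 4 * a ^ 3 - 3 * a * ‖y‖ ^ 2 := by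
  rw [spectralBall, Set.mem_preimage, mem_numericalRadiusBall_iff_det
    (isHermitian_tracelessSymm y) (trace_tracelessSymm y) ha, trace_tracelessSymm_mul_self,
    eval_cartanCubic, abs_mul, abs_of_pos (four_pos (α := ℝ))]
  constructor <;> intro h <;> linarith

end TracelessThree

/-! ### Extreme eigenvalues -/

lemma isCompact_sum_sq_eq_one (n : Type*) [Fintype n] :
    IsCompact {v : n → ℝ | ∑ i, v i ^ 2 = 1} := by
  refine Metric.isCompact_of_isClosed_isBounded
    (isClosed_eq (by fun_prop) continuous_const) ?_
  refine (Metric.isBounded_closedBall (x := (0 : n → ℝ)) (r := 1)).subset fun v hv => ?_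
  rw [mem_closedBall_zero_iff, pi_norm_le_iff_of_nonneg zero_le_one]
  intro i
  rw [Real.norm_eq_abs, ← sq_le_one_iff_abs_le_one, ← (show ∑ i, v i ^ 2 = 1 from hv)]
  exact Finset.single_le_sum (f := fun i => v i ^ 2) (fun j _ => sq_nonneg _) (Finset.mem_univ i)

section ExtremeEigenvalues

variable {p : ℕ}

lemma isCompact_rayleigh (A : Matrix (Fin p) (Fin p) ℝ) :
    IsCompact {r | ∃ v : Fin p → ℝ, ∑ i, v i ^ 2 = 1 ∧ r = v ⬝ᵥ A *ᵥ v} := by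
  have himage : {r | ∃ v : Fin p → ℝ, ∑ i, v i ^ 2 = 1 ∧ r = v ⬝ᵥ A *ᵥ v} =
      (fun v => v ⬝ᵥ A *ᵥ v) '' {v | ∑ i, v i ^ 2 = 1} := by
    ext r
    simp [eq_comm]
  rw [himage]
  exact (isCompact_sum_sq_eq_one (Fin p)).image (by fun_prop)

lemma nonempty_rayleigh [NeZero p] (A : Matrix (Fin p) (Fin p) ℝ) :
    {r | ∃ v : Fin p → ℝ, ∑ i, v i ^ 2 = 1 ∧ r = v ⬝ᵥ A *ᵥ v}.Nonempty :=
  ⟨_, Pi.single 0 1, by simp [Pi.single_apply, ite_pow], rfl⟩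

lemma max_abs_maxEig_minEig_sub_le_iff [NeZero p] {A : Matrix (Fin p) (Fin p) ℝ} {c s : ℝ} :
    max |maxEig A - c| |minEig A - c| ≤ s ↔ A - c • 1 ∈ numericalRadiusBall (Fin p) s := by
  have hform {v : Fin p → ℝ} (hv : ∑ i, v i ^ 2 = 1) :
      v ⬝ᵥ (A - c • 1) *ᵥ v = v ⬝ᵥ A *ᵥ v - c := by
    have hvv : v ⬝ᵥ v = 1 := by simpa only [dotProduct, sq] using hv
    rw [sub_mulVec, smul_mulVec, one_mulVec, dotProduct_sub, dotProduct_smul, hvv, smul_eq_mul,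
      mul_one]
  rw [max_le_iff]
  constructor
  · rintro ⟨hmax, hmin⟩ u hu
    have hle : u ⬝ᵥ A *ᵥ u ≤ maxEig A := le_csSup (isCompact_rayleigh A).bddAbove ⟨u, hu, rfl⟩
    have hge : minEig A ≤ u ⬝ᵥ A *ᵥ u := csInf_le (isCompact_rayleigh A).bddBelow ⟨u, hu, rfl⟩
    rw [hform hu, abs_le]
    rw [abs_le] at hmax hmin
    constructor <;> linarith
  · intro h
    obtain ⟨v, hv, hmax⟩ := (isCompact_rayleigh A).sSup_mem (nonempty_rayleigh A)
    obtain ⟨w, hw, hmin⟩ := (isCompact_rayleigh A).sInf_mem (nonempty_rayleigh A)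
    rw [maxEig, minEig, hmax, hmin, ← hform hv, ← hform hw]
    exact ⟨h v hv, h w hw⟩

end ExtremeEigenvalues

lemma natCast_smul_Sn (p n : ℕ) (x : Fin n → Fin p → ℝ) :
    (n : ℝ) • Sn p n x = ∑ i, vecMulVec (x i) (x i) := by
  ext a b
  rcases eq_or_ne n 0 with rfl | hn
  · simp
  · have : (n : ℝ) ≠ 0 := Nat.cast_ne_zero.2 hn
    simp [Sn, Matrix.sum_apply, vecMulVec_apply, this]

/-! ### The degree-two spherical harmonics on the two-sphere -/

/-- The vector of normalized spherical harmonics of degree two in three variables: it represents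
the functional `t ↦ √5 * x ⬝ᵥ tracelessSymm t *ᵥ x`. -/
def harmonicVec (x : Fin 3 → ℝ) : EuclideanSpace ℝ (Fin 5) :=
  !₂[√5 / 2 * (2 * x 2 ^ 2 - x 0 ^ 2 - x 1 ^ 2), √15 / 2 * (x 0 ^ 2 - x 1 ^ 2),
    √15 * (x 0 * x 1), √15 * (x 0 * x 2), √15 * (x 1 * x 2)]

lemma continuous_harmonicVec : Continuous harmonicVec := by
  refine (PiLp.continuous_toLp 2 _).comp (continuous_pi fun i => ?_)
  fin_cases i <;> dsimp <;> fun_prop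

lemma sqrt_fifteen : √15 = √3 * √5 := by
  rw [← Real.sqrt_mul (by norm_num)]
  norm_num

lemma inner_harmonicVec (x : Fin 3 → ℝ) (t : EuclideanSpace ℝ (Fin 5)) :
    inner ℝ (harmonicVec x) t = √5 * (x ⬝ᵥ tracelessSymm t *ᵥ x) := by
  simp [harmonicVec, tracelessSymm_apply, EuclideanSpace.inner_eq_star_dotProduct, dotProduct,
    mulVec, Fin.sum_univ_three, Fin.sum_univ_five, sqrt_fifteen]
  ring

lemma tracelessSymm_harmonicVec {x : Fin 3 → ℝ} (hx : ∑ a, x a ^ 2 = 1) :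
    tracelessSymm (harmonicVec x) =
      (3 * √5 / 2) • (vecMulVec x x - (1 / 3 : ℝ) • (1 : Matrix (Fin 3) (Fin 3) ℝ)) := by
  have h3 : √3 ^ 2 = 3 := Real.sq_sqrt (by norm_num)
  rw [Fin.sum_univ_three] at hx
  ext i j
  fin_cases i <;> fin_cases j <;>
    simp [harmonicVec, tracelessSymm_apply, vecMulVec_apply, sqrt_fifteen] <;> grind

lemma tracelessSymm_inv_sqrt_smul_sum_harmonicVec {n : ℕ} {x : Fin n → Fin 3 → ℝ}
    (hx : ∀ i, ∑ a, x i a ^ 2 = 1) :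
    tracelessSymm ((√n)⁻¹ • ∑ i, harmonicVec (x i)) =
      (3 * √5 / 2 * √n) • (Sn 3 n x - (1 / 3 : ℝ) • (1 : Matrix (Fin 3) (Fin 3) ℝ)) := by
  calc tracelessSymm ((√n)⁻¹ • ∑ i, harmonicVec (x i))
      = ((√n)⁻¹ * (3 * √5 / 2)) •
          ∑ i, (vecMulVec (x i) (x i) - (1 / 3 : ℝ) • (1 : Matrix (Fin 3) (Fin 3) ℝ)) := by
        simp only [map_smul, map_sum, tracelessSymm_harmonicVec (hx _), Finset.smul_sum, mul_smul]
    _ = ((√n)⁻¹ * (3 * √5 / 2) * n) •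
          (Sn 3 n x - (1 / 3 : ℝ) • (1 : Matrix (Fin 3) (Fin 3) ℝ)) := by
        rw [Finset.sum_sub_distrib, ← natCast_smul_Sn, Finset.sum_const, Finset.card_univ,
          Fintype.card_fin, ← Nat.cast_smul_eq_nsmul ℝ, ← smul_sub, mul_smul _ (n : ℝ)]
    _ = _ := by
        congr 1
        rw [mul_right_comm, inv_mul_eq_div, Real.div_sqrt, mul_comm]

lemma inv_sqrt_smul_sum_harmonicVec_mem_spectralBall_iff {n : ℕ} (hn : 0 < n)
    {x : Fin n → Fin 3 → ℝ} (hx : ∀ i, ∑ a, x i a ^ 2 = 1) (ℓ : ℝ) :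
    (√n)⁻¹ • ∑ i, harmonicVec (x i) ∈ spectralBall (√5 * ℓ / 2) ↔
      √n * max |3 * maxEig (Sn 3 n x) - 1| |3 * minEig (Sn 3 n x) - 1| ≤ ℓ := by
  have : 0 < √(n : ℝ) := Real.sqrt_pos.2 (Nat.cast_pos.2 hn)
  have hthree (r : ℝ) : |3 * r - 1| = 3 * |r - 1 / 3| := by
    rw [show 3 * r - 1 = 3 * (r - 1 / 3) by ring, abs_mul, abs_of_pos three_pos]
  have hradius : √5 * ℓ / 2 = 3 * √5 / 2 * √n * (ℓ / (√n * 3)) := by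
    field_simp
  rw [spectralBall, Set.mem_preimage, tracelessSymm_inv_sqrt_smul_sum_harmonicVec hx, hradius,
    smul_mem_numericalRadiusBall_iff (by positivity), ← max_abs_maxEig_minEig_sub_le_iff, hthree,
    hthree, ← mul_max_of_nonneg _ _ zero_le_three, ← mul_assoc, le_div_iff₀' (by positivity)]

/-! ### Moments of the uniform distribution on the sphere -/

section SphereMoments

variable {n : Type*} [Fintype n] [DecidableEq n]

/-- The measure is carried by the unit sphere and invariant under the orthogonal group; together
with total mass one this characterizes the uniform distribution on the sphere. -/
structure IsUniformOnSphere (U : Measure (n → ℝ)) : Prop where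
  sphere : U {x | ∑ i, x i ^ 2 = 1}ᶜ = 0
  map_mulVec : ∀ O : Matrix n n ℝ, O * Oᵀ = 1 → U.map (fun x => O.mulVec x) = U

-- The Householder reflection exchanging `v` and `w`.
lemma exists_orthogonal_vecMul_eq {v w : n → ℝ} (h : v ⬝ᵥ v = w ⬝ᵥ w) :
    ∃ O : Matrix n n ℝ, O * Oᵀ = 1 ∧ v ᵥ* O = w := by
  rcases eq_or_ne v w with rfl | hvw
  · exact ⟨1, by simp, by simp⟩
  have hu : (v - w) ⬝ᵥ (v - w) ≠ 0 := fun h0 => hvw (sub_eq_zero.1 (dotProduct_self_eq_zero.1 h0))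
  have hvu : 2 * (v ⬝ᵥ (v - w)) = (v - w) ⬝ᵥ (v - w) := by
    simp only [dotProduct_sub, sub_dotProduct, h, dotProduct_comm w v]
    ring
  refine ⟨1 - (2 / ((v - w) ⬝ᵥ (v - w))) • vecMulVec (v - w) (v - w), ?_, ?_⟩
  · generalize v - w = u at hu
    rw [transpose_sub, transpose_smul, transpose_vecMulVec, transpose_one]
    have hsq : vecMulVec u u * vecMulVec u u = (u ⬝ᵥ u) • vecMulVec u u := by
      rw [vecMulVec_mul_vecMulVec, vecMulVec_smul]
    have hcoeff : 2 / (u ⬝ᵥ u) * (2 / (u ⬝ᵥ u)) * (u ⬝ᵥ u) = 2 * (2 / (u ⬝ᵥ u)) := by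
      field_simp
    rw [sub_mul, Matrix.one_mul, mul_sub, Matrix.mul_one, Matrix.mul_smul, Matrix.smul_mul,
      hsq, smul_smul, smul_smul, hcoeff, two_mul, add_smul]
    abel
  · rw [vecMul_sub, vecMul_one, vecMul_smul, vecMul_vecMulVec, smul_smul, div_mul_eq_mul_div, hvu,
      div_self hu, one_smul, sub_sub_cancel]

namespace IsUniformOnSphere

variable {U : Measure (n → ℝ)}

lemma ae_sum_sq_eq_one (hU : IsUniformOnSphere U) : ∀ᵐ x ∂U, ∑ i, x i ^ 2 = 1 :=
  ae_iff.2 hU.sphere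

lemma integrable_of_continuous [IsFiniteMeasure U] (hU : IsUniformOnSphere U)
    {f : (n → ℝ) → ℝ} (hf : Continuous f) : Integrable f U := by
  rw [← Measure.restrict_eq_self_of_ae_mem (s := {x : n → ℝ | ∑ i, x i ^ 2 = 1})
    hU.ae_sum_sq_eq_one]
  exact hf.continuousOn.integrableOn_compact (isCompact_sum_sq_eq_one n)

lemma integral_comp_inner_eq (hU : IsUniformOnSphere U) {v w : EuclideanSpace ℝ n}
    (h : ‖v‖ = ‖w‖) {f : ℝ → ℝ} (hf : Continuous f) :
    ∫ x, f (inner ℝ (WithLp.toLp 2 x) v) ∂U = ∫ x, f (inner ℝ (WithLp.toLp 2 x) w) ∂U := by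
  obtain ⟨O, hO, hvO⟩ : ∃ O : Matrix n n ℝ, O * Oᵀ = 1 ∧ v.ofLp ᵥ* O = w.ofLp := by
    refine exists_orthogonal_vecMul_eq ?_
    have hsq (z : EuclideanSpace ℝ n) : z.ofLp ⬝ᵥ z.ofLp = ‖z‖ ^ 2 := by
      rw [EuclideanSpace.real_norm_sq_eq]
      simp only [dotProduct, sq]
    rw [hsq, hsq, h]
  have hinner (x : n → ℝ) : inner ℝ (WithLp.toLp 2 (O *ᵥ x)) v = inner ℝ (WithLp.toLp 2 x) w := by
    simp [EuclideanSpace.inner_eq_star_dotProduct, dotProduct_mulVec, hvO]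
  conv_lhs => rw [← hU.map_mulVec O hO]
  rw [integral_map (by fun_prop) (by fun_prop)]
  simp only [hinner]

lemma ae_sum_inner_sq_eq_one (hU : IsUniformOnSphere U)
    (b : OrthonormalBasis n ℝ (EuclideanSpace ℝ n)) :
    ∀ᵐ x ∂U, ∑ i, inner ℝ (WithLp.toLp 2 x) (b i) ^ 2 = 1 := by
  filter_upwards [hU.ae_sum_sq_eq_one] with x hx
  have h := b.sum_sq_norm_inner_left (WithLp.toLp 2 x)
  simp only [Real.norm_eq_abs, sq_abs, EuclideanSpace.real_norm_sq_eq] at h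
  rw [h, hx]

variable [IsProbabilityMeasure U]

lemma integral_inner_sq (hU : IsUniformOnSphere U)
    (b : OrthonormalBasis n ℝ (EuclideanSpace ℝ n)) (i : n) :
    ∫ x, inner ℝ (WithLp.toLp 2 x) (b i) ^ 2 ∂U = 1 / Fintype.card n := by
  have : Nonempty n := ⟨i⟩
  have hsum : ∑ j, ∫ x, inner ℝ (WithLp.toLp 2 x) (b j) ^ 2 ∂U = 1 := by
    rw [← integral_finsetSum _ fun j _ => hU.integrable_of_continuous (by fun_prop),
      integral_congr_ae (hU.ae_sum_inner_sq_eq_one b)]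
    simp
  have hconst (j : n) : ∫ x, inner ℝ (WithLp.toLp 2 x) (b j) ^ 2 ∂U =
      ∫ x, inner ℝ (WithLp.toLp 2 x) (b i) ^ 2 ∂U :=
    hU.integral_comp_inner_eq (by simp) (continuous_pow 2)
  simp only [hconst, Finset.sum_const, Finset.card_univ, nsmul_eq_mul] at hsum
  exact eq_one_div_of_mul_eq_one_right hsum

-- Polarization of the fourth moment, which by invariance is a multiple of the fourth power of
-- the norm.
lemma three_mul_integral_inner_sq_mul_inner_sq (hU : IsUniformOnSphere U)
    {v w : EuclideanSpace ℝ n} (hv : ‖v‖ = 1) (hw : ‖w‖ = 1) (hvw : inner ℝ v w = 0) :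
    3 * ∫ x, inner ℝ (WithLp.toLp 2 x) v ^ 2 * inner ℝ (WithLp.toLp 2 x) w ^ 2 ∂U =
      ∫ x, inner ℝ (WithLp.toLp 2 x) v ^ 4 ∂U := by
  set m := ∫ x, inner ℝ (WithLp.toLp 2 x) v ^ 4 ∂U
  have hint {f : (n → ℝ) → ℝ} (hf : Continuous f) : Integrable f U := hU.integrable_of_continuous hf
  have hmoment {u : EuclideanSpace ℝ n} {c : ℝ} (hc : 0 ≤ c) (hu : ‖u‖ = c) :
      ∫ x, inner ℝ (WithLp.toLp 2 x) u ^ 4 ∂U = c ^ 4 * m := by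
    rw [hU.integral_comp_inner_eq (w := c • v) (by simp [norm_smul, hu, hv, abs_of_nonneg hc])
      (continuous_pow 4)]
    simp only [inner_smul_right, mul_pow, integral_const_mul, m]
  have hsqrt : √2 ^ 4 = 4 := by
    rw [show √2 ^ 4 = (√2 ^ 2) ^ 2 by ring, Real.sq_sqrt zero_le_two]
    norm_num
  have hadd : ∫ x, inner ℝ (WithLp.toLp 2 x) (v + w) ^ 4 ∂U = 4 * m := by
    rw [hmoment (Real.sqrt_nonneg 2) ?_, hsqrt]
    rw [(norm_add_eq_sqrt_iff_real_inner_eq_zero).2 hvw, hv, hw]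
    norm_num
  have hsub : ∫ x, inner ℝ (WithLp.toLp 2 x) (v - w) ^ 4 ∂U = 4 * m := by
    rw [hmoment (Real.sqrt_nonneg 2) ?_, hsqrt]
    rw [(norm_sub_eq_sqrt_iff_real_inner_eq_zero).2 hvw, hv, hw]
    norm_num
  have hpol : ∫ x, (inner ℝ (WithLp.toLp 2 x) (v + w) ^ 4 +
      inner ℝ (WithLp.toLp 2 x) (v - w) ^ 4) ∂U =
      ∫ x, (2 * inner ℝ (WithLp.toLp 2 x) v ^ 4 + 2 * inner ℝ (WithLp.toLp 2 x) w ^ 4 +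
        12 * (inner ℝ (WithLp.toLp 2 x) v ^ 2 * inner ℝ (WithLp.toLp 2 x) w ^ 2)) ∂U := by
    congr 1 with x
    rw [inner_add_right, inner_sub_right]
    ring
  rw [integral_add (hint (by fun_prop)) (hint (by fun_prop)), hadd, hsub,
    integral_add (hint (by fun_prop)) (hint (by fun_prop)),
    integral_add (hint (by fun_prop)) (hint (by fun_prop)), integral_const_mul, integral_const_mul,
    integral_const_mul, hmoment zero_le_one hw] at hpol
  linarith

lemma sum_integral_inner_sq_mul_inner_sq (hU : IsUniformOnSphere U)
    (b : OrthonormalBasis n ℝ (EuclideanSpace ℝ n)) :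
    ∑ i, ∑ j, ∫ x, inner ℝ (WithLp.toLp 2 x) (b i) ^ 2 *
      inner ℝ (WithLp.toLp 2 x) (b j) ^ 2 ∂U = 1 := by
  have hint (i j : n) : Integrable (fun x => inner ℝ (WithLp.toLp 2 x) (b i) ^ 2 *
      inner ℝ (WithLp.toLp 2 x) (b j) ^ 2) U := hU.integrable_of_continuous (by fun_prop)
  calc _ = ∫ x, (∑ i, inner ℝ (WithLp.toLp 2 x) (b i) ^ 2) *
        ∑ j, inner ℝ (WithLp.toLp 2 x) (b j) ^ 2 ∂U := by
        simp only [Finset.sum_mul_sum]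
        rw [integral_finsetSum _ fun i _ => integrable_finsetSum _ fun j _ => hint i j]
        simp only [integral_finsetSum _ fun j _ => hint _ j]
    _ = ∫ _, 1 ∂U := by
        refine integral_congr_ae ?_
        filter_upwards [hU.ae_sum_inner_sq_eq_one b] with x hx
        rw [hx, one_mul]
    _ = 1 := by simp

lemma integral_inner_sq_mul_inner_sq (hU : IsUniformOnSphere U)
    (b : OrthonormalBasis n ℝ (EuclideanSpace ℝ n)) (i j : n) :
    ∫ x, inner ℝ (WithLp.toLp 2 x) (b i) ^ 2 * inner ℝ (WithLp.toLp 2 x) (b j) ^ 2 ∂U =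
      (1 + 2 * if i = j then 1 else 0) / (Fintype.card n * (Fintype.card n + 2)) := by
  have : Nonempty n := ⟨i⟩
  set m := ∫ x, inner ℝ (WithLp.toLp 2 x) (b i) ^ 4 ∂U
  have hpair (k l : n) :
      ∫ x, inner ℝ (WithLp.toLp 2 x) (b k) ^ 2 * inner ℝ (WithLp.toLp 2 x) (b l) ^ 2 ∂U =
        (1 + 2 * if k = l then 1 else 0) * (m / 3) := by
    have hk : ∫ x, inner ℝ (WithLp.toLp 2 x) (b k) ^ 4 ∂U = m :=
      hU.integral_comp_inner_eq (by simp) (continuous_pow 4)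
    rcases eq_or_ne k l with rfl | hkl
    · simp only [← pow_add, hk, if_true]
      ring
    · rw [if_neg hkl, ← hk, ← hU.three_mul_integral_inner_sq_mul_inner_sq
        (b.norm_eq_one k) (b.norm_eq_one l) (b.inner_eq_zero hkl)]
      ring
  have hsum := hU.sum_integral_inner_sq_mul_inner_sq b
  have hm3 : (Fintype.card n * (Fintype.card n + 2) : ℝ) * (m / 3) = 1 := by
    simp only [hpair, ← Finset.sum_mul, Finset.sum_add_distrib, ← Finset.mul_sum] at hsum
    rw [← hsum]
    congr 1
    simp only [Finset.sum_const, Finset.card_univ, nsmul_eq_mul, mul_one, Finset.sum_ite_eq,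
      Finset.mem_univ, if_true]
    ring
  rw [hpair, eq_div_iff (by positivity)]
  linear_combination (1 + 2 * if i = j then 1 else 0) * hm3

variable {A : Matrix n n ℝ}

lemma integral_dotProduct_mulVec (hU : IsUniformOnSphere U) (hA : A.IsHermitian) :
    ∫ x, x ⬝ᵥ A *ᵥ x ∂U = A.trace / Fintype.card n := by
  simp only [dotProduct_mulVec_eq_sum_eigenvalues hA]
  rw [integral_finsetSum _ fun _ _ => hU.integrable_of_continuous (by fun_prop)]
  simp only [integral_const_mul, hU.integral_inner_sq, hA.trace_eq_sum_eigenvalues, Finset.sum_div,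
    mul_one_div, RCLike.ofReal_real_eq_id, id]

lemma integral_dotProduct_mulVec_sq (hU : IsUniformOnSphere U) (hA : A.IsHermitian) :
    ∫ x, (x ⬝ᵥ A *ᵥ x) ^ 2 ∂U =
      (A.trace ^ 2 + 2 * (A * A).trace) / (Fintype.card n * (Fintype.card n + 2)) := by
  set b := hA.eigenvectorBasis
  set d := hA.eigenvalues
  have hint (i j : n) : Integrable (fun x => d i * d j * (inner ℝ (WithLp.toLp 2 x) (b i) ^ 2 *
      inner ℝ (WithLp.toLp 2 x) (b j) ^ 2)) U := hU.integrable_of_continuous (by fun_prop)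
  calc ∫ x, (x ⬝ᵥ A *ᵥ x) ^ 2 ∂U
      = ∫ x, ∑ i, ∑ j, d i * d j * (inner ℝ (WithLp.toLp 2 x) (b i) ^ 2 *
          inner ℝ (WithLp.toLp 2 x) (b j) ^ 2) ∂U := by
        simp only [dotProduct_mulVec_eq_sum_eigenvalues hA, sq (∑ _, _), Finset.sum_mul_sum,
          mul_mul_mul_comm, b, d]
    _ = ∑ i, ∑ j, d i * d j * ((1 + 2 * if i = j then 1 else 0) /
          (Fintype.card n * (Fintype.card n + 2))) := by
        rw [integral_finsetSum _ fun i _ => integrable_finsetSum _ fun j _ => hint i j]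
        simp only [integral_finsetSum _ fun j _ => hint _ j, integral_const_mul,
          hU.integral_inner_sq_mul_inner_sq]
    _ = ((∑ i, d i) * (∑ j, d j) + 2 * ∑ i, d i ^ 2) /
          (Fintype.card n * (Fintype.card n + 2)) := by
        rw [Finset.sum_mul_sum, Finset.mul_sum, ← Finset.sum_add_distrib, Finset.sum_div]
        refine Finset.sum_congr rfl fun _ _ => ?_
        simp only [← mul_div_assoc, ← Finset.sum_div, mul_add, Finset.sum_add_distrib, mul_one,
          mul_ite, mul_zero, Finset.sum_ite_eq, Finset.mem_univ, if_true]
        ring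
    _ = _ := by
        rw [trace_mul_self_eq_sum_eigenvalues_sq hA, hA.trace_eq_sum_eigenvalues, sq (∑ _, _)]
        rfl

end IsUniformOnSphere

end SphereMoments

section Harmonic

variable {U : Measure (Fin 3 → ℝ)} [IsProbabilityMeasure U]

lemma IsUniformOnSphere.integral_inner_harmonicVec (hU : IsUniformOnSphere U)
    (t : EuclideanSpace ℝ (Fin 5)) : ∫ x, inner ℝ (harmonicVec x) t ∂U = 0 := by
  simp only [inner_harmonicVec, integral_const_mul]
  rw [hU.integral_dotProduct_mulVec (isHermitian_tracelessSymm t), trace_tracelessSymm, zero_div,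
    mul_zero]

lemma IsUniformOnSphere.integral_inner_harmonicVec_sq (hU : IsUniformOnSphere U)
    (t : EuclideanSpace ℝ (Fin 5)) : ∫ x, inner ℝ (harmonicVec x) t ^ 2 ∂U = ‖t‖ ^ 2 := by
  simp only [inner_harmonicVec, mul_pow, integral_const_mul]
  rw [hU.integral_dotProduct_mulVec_sq (isHermitian_tracelessSymm t), trace_tracelessSymm,
    trace_tracelessSymm_mul_self, Fintype.card_fin, Real.sq_sqrt (by norm_num)]
  push_cast
  ring

end Harmonic

/-! ### The central limit theorem for isotropic random vectors -/

section CentralLimit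

variable {ι : Type*} [Fintype ι] {Ω : Type*} [MeasurableSpace Ω] {U : Measure Ω}
  [IsProbabilityMeasure U] {Y : Ω → EuclideanSpace ℝ ι}

lemma charFun_map_smul_sum_pi (hY : Measurable Y) (n : ℕ) (c : ℝ) (t : EuclideanSpace ℝ ι) :
    charFun ((Measure.pi fun _ : Fin n => U).map fun x => c • ∑ i, Y (x i)) t =
      charFun (U.map Y) (c • t) ^ n := by
  have hexp (x : Fin n → Ω) : Complex.exp (inner ℝ (c • ∑ i, Y (x i)) t * Complex.I) =
      ∏ i, Complex.exp (inner ℝ (Y (x i)) (c • t) * Complex.I) := by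
    rw [← Complex.exp_sum, real_inner_smul_left, sum_inner, Finset.mul_sum]
    push_cast
    simp only [Finset.sum_mul, real_inner_smul_right, Complex.ofReal_mul]
  have hsum : Measurable fun x : Fin n → Ω => c • ∑ i, Y (x i) := by fun_prop
  rw [charFun_apply, integral_map hsum.aemeasurable (by fun_prop), charFun_apply,
    integral_map hY.aemeasurable (by fun_prop)]
  simp only [hexp]
  rw [integral_fintype_prod_eq_prod (fun _ : Fin n => fun x : Ω =>
    Complex.exp (inner ℝ (Y x) (c • t) * Complex.I)), Finset.prod_const, Finset.card_univ,
    Fintype.card_fin]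

-- The one-dimensional theorem applied to the component of `Y` in the direction of `t`.
lemma tendsto_charFun_inv_sqrt_smul_sum_pi (hY : Measurable Y)
    (hmean : ∀ t, ∫ x, inner ℝ (Y x) t ∂U = 0)
    (hcov : ∀ t, ∫ x, inner ℝ (Y x) t ^ 2 ∂U = ‖t‖ ^ 2) (t : EuclideanSpace ℝ ι) :
    Tendsto (fun n : ℕ => charFun
        ((Measure.pi fun _ : Fin n => U).map fun x => (√n)⁻¹ • ∑ i, Y (x i)) t) atTop
      (𝓝 (charFun (stdGaussian (EuclideanSpace ℝ ι)) t)) := by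
  have : IsProbabilityMeasure (U.map Y) := Measure.isProbabilityMeasure_map hY.aemeasurable
  simp only [charFun_map_smul_sum_pi hY, charFun_stdGaussian]
  rcases eq_or_ne t 0 with rfl | ht
  · simp
  have hnorm : ‖t‖ ≠ 0 := norm_ne_zero_iff.2 ht
  have hlim := tendsto_charFun_inv_sqrt_mul_pow (P := U)
    (X := fun x => inner ℝ (Y x) (‖t‖⁻¹ • t)) (by fun_prop) (hmean _) (by
      simp only [Pi.pow_apply]
      rw [hcov, norm_smul, norm_inv, norm_norm, inv_mul_cancel₀ hnorm, one_pow]) ‖t‖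
  convert hlim using 2 with n
  congr 1
  rw [charFun_apply, integral_map (by fun_prop) (by fun_prop), charFun_apply_real,
    integral_map (by fun_prop) (by fun_prop)]
  congr 1 with x
  congr 2
  rw [real_inner_smul_right, real_inner_smul_right]
  push_cast
  have : (‖t‖ : ℂ) ≠ 0 := Complex.ofReal_ne_zero.2 hnorm
  field_simp

lemma tendsto_pi_real_inv_sqrt_smul_sum_mem (hY : Measurable Y)
    (hmean : ∀ t, ∫ x, inner ℝ (Y x) t ∂U = 0)
    (hcov : ∀ t, ∫ x, inner ℝ (Y x) t ^ 2 ∂U = ‖t‖ ^ 2)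
    {K : Set (EuclideanSpace ℝ ι)} (hK : MeasurableSet K)
    (hfrontier : stdGaussian (EuclideanSpace ℝ ι) (frontier K) = 0) :
    Tendsto (fun n : ℕ => (Measure.pi fun _ : Fin n => U).real
        {x | (√n)⁻¹ • ∑ i, Y (x i) ∈ K}) atTop
      (𝓝 ((stdGaussian (EuclideanSpace ℝ ι)).real K)) := by
  have hsum (n : ℕ) : Measurable fun x : Fin n → Ω => (√n)⁻¹ • ∑ i, Y (x i) := by fun_prop
  obtain ⟨P, hP⟩ : ∃ P : ℕ → ProbabilityMeasure (EuclideanSpace ℝ ι), ∀ n,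
      (P n : Measure (EuclideanSpace ℝ ι)) =
        (Measure.pi fun _ : Fin n => U).map fun x => (√n)⁻¹ • ∑ i, Y (x i) :=
    ⟨fun n => ⟨_, Measure.isProbabilityMeasure_map (hsum n).aemeasurable⟩, fun _ => rfl⟩
  obtain ⟨G, hG⟩ : ∃ G : ProbabilityMeasure (EuclideanSpace ℝ ι),
      (G : Measure (EuclideanSpace ℝ ι)) = stdGaussian (EuclideanSpace ℝ ι) :=
    ⟨⟨_, isProbabilityMeasure_stdGaussian⟩, rfl⟩
  have hweak : Tendsto P atTop (𝓝 G) := by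
    refine ProbabilityMeasure.tendsto_iff_tendsto_charFun.2 fun t => ?_
    simp only [hP, hG]
    exact tendsto_charFun_inv_sqrt_smul_sum_pi hY hmean hcov t
  rw [← hG] at hfrontier
  have hmeasure := (ENNReal.tendsto_toReal (measure_ne_top _ _)).comp
    (ProbabilityMeasure.tendsto_measure_of_null_frontier_of_tendsto' hweak hfrontier)
  rw [hG] at hmeasure
  refine hmeasure.congr fun n => ?_
  rw [Function.comp_apply, hP, Measure.map_apply (hsum n) hK]
  rfl

end CentralLimit

/-! ### Gaussian integrals of polynomials -/

lemma integral_Ioi_exp_neg_sq_half :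
    ∫ u in Set.Ioi (0 : ℝ), rexp (-u ^ 2 / 2) = √(2 * π) / 2 := by
  convert integral_gaussian_Ioi (1 / 2) using 2
  · ext u
    ring_nf
  · ring_nf

lemma stdNormalCDF_eq (t : ℝ) :
    stdNormalCDF t = 1 / 2 + (√(2 * π))⁻¹ * ∫ u in (0 : ℝ)..t, rexp (-u ^ 2 / 2) := by
  have hint : Integrable fun u : ℝ => rexp (-u ^ 2 / 2) := by
    refine (integrable_exp_neg_mul_sq (b := 1 / 2) (by norm_num)).congr (.of_forall fun u => ?_)
    ring_nf
  have hIic : ∫ u in Set.Iic (0 : ℝ), rexp (-u ^ 2 / 2) = √(2 * π) / 2 := by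
    have hneg := integral_comp_neg_Iic (0 : ℝ) fun u => rexp (-u ^ 2 / 2)
    simp only [neg_sq, neg_zero] at hneg
    rw [hneg, integral_Ioi_exp_neg_sq_half]
  have hsub := intervalIntegral.integral_Iic_sub_Iic (a := 0) (b := t) hint.integrableOn
    hint.integrableOn
  rw [stdNormalCDF, integral_const_mul, ← hsub, hIic]
  field_simp
  ring

lemma integral_Ioi_pow_four_mul_exp_neg_sq_half :
    ∫ r in Set.Ioi (0 : ℝ), r ^ 4 * rexp (-r ^ 2 / 2) = 3 * √(2 * π) / 2 := by
  rw [integral_Ioi_pow_add_two_mul_exp_neg_sq_half 2,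
    integral_Ioi_pow_add_two_mul_exp_neg_sq_half 0]
  simp only [pow_zero, one_mul, integral_Ioi_exp_neg_sq_half]
  push_cast
  ring

lemma hasDerivAt_exp_neg_sq_half (r : ℝ) :
    HasDerivAt (fun r : ℝ => rexp (-r ^ 2 / 2)) (-r * rexp (-r ^ 2 / 2)) r := by
  refine (((hasDerivAt_pow 2 r).fun_neg).div_const 2).exp.congr_deriv ?_
  push_cast
  ring

lemma integral_pow_four_mul_exp_neg_sq_half (a : ℝ) :
    ∫ r in (0 : ℝ)..a, r ^ 4 * rexp (-r ^ 2 / 2) =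
      3 * (∫ r in (0 : ℝ)..a, rexp (-r ^ 2 / 2)) - (a ^ 3 + 3 * a) * rexp (-a ^ 2 / 2) := by
  have hderiv (r : ℝ) : HasDerivAt (fun r : ℝ => -((r ^ 3 + 3 * r) * rexp (-r ^ 2 / 2)))
      (r ^ 4 * rexp (-r ^ 2 / 2) - 3 * rexp (-r ^ 2 / 2)) r := by
    refine ((((hasDerivAt_pow 3 r).fun_add ((hasDerivAt_id' r).const_mul 3))).fun_mul
      (hasDerivAt_exp_neg_sq_half r)).fun_neg.congr_deriv ?_
    push_cast
    ring
  have hpow : Continuous fun r : ℝ => r ^ 4 * rexp (-r ^ 2 / 2) := by fun_prop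
  have hexp : Continuous fun r : ℝ => 3 * rexp (-r ^ 2 / 2) := by fun_prop
  have hftc := intervalIntegral.integral_eq_sub_of_hasDerivAt (a := 0) (b := a)
    (fun r _ => hderiv r) ((hpow.sub hexp).intervalIntegrable _ _)
  rw [intervalIntegral.integral_sub (hpow.intervalIntegrable _ _) (hexp.intervalIntegrable _ _),
    intervalIntegral.integral_const_mul] at hftc
  linarith

lemma integral_cubic_mul_exp_neg_sq_half (c d a b : ℝ) :
    ∫ r in a..b, (c * r - d * r ^ 3) * rexp (-r ^ 2 / 2) =
      (d * b ^ 2 + 2 * d - c) * rexp (-b ^ 2 / 2) -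
        (d * a ^ 2 + 2 * d - c) * rexp (-a ^ 2 / 2) := by
  have hderiv (r : ℝ) : HasDerivAt (fun r : ℝ => (d * r ^ 2 + (2 * d - c)) * rexp (-r ^ 2 / 2))
      ((c * r - d * r ^ 3) * rexp (-r ^ 2 / 2)) r := by
    refine ((((hasDerivAt_pow 2 r).const_mul d).add_const (2 * d - c)).fun_mul
      (hasDerivAt_exp_neg_sq_half r)).congr_deriv ?_
    push_cast
    ring
  have hcont : Continuous fun r : ℝ => (c * r - d * r ^ 3) * rexp (-r ^ 2 / 2) := by fun_prop
  rw [intervalIntegral.integral_eq_sub_of_hasDerivAt (fun r _ => hderiv r)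
    (hcont.intervalIntegrable _ _)]
  ring

/-! ### The Gaussian measure of a spectral ball -/

section Slices

variable {a r : ℝ}

/-- The values that Cartan's cubic takes on the unit vectors `ω` for which `r • ω` lies in
`spectralBall a`. -/
def cubicSlice (a r : ℝ) : Set ℝ := {u | r ^ 3 * |u| ≤ 4 * a ^ 3 - 3 * a * r ^ 2}

lemma measurableSet_cubicSlice (a r : ℝ) : MeasurableSet (cubicSlice a r) :=
  measurableSet_le (by fun_prop) (by fun_prop)

lemma smul_mem_spectralBall_iff (ha : 0 < a) (hr : 0 < r)
    (ω : Metric.sphere (0 : EuclideanSpace ℝ (Fin 5)) 1) :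
    r • (ω : EuclideanSpace ℝ (Fin 5)) ∈ spectralBall a ↔
      MvPolynomial.eval ω.1.ofLp cartanCubic ∈ cubicSlice a r := by
  rw [mem_spectralBall_iff ha, norm_smul, norm_eq_of_mem_sphere, mul_one, Real.norm_eq_abs, sq_abs,
    WithLp.ofLp_smul, eval_smul_of_isHomogeneous isHomogeneous_cartanCubic, abs_mul,
    abs_of_pos (pow_pos hr 3)]
  rfl

lemma cube_sub_sub_eq_sub_mul_sq (a r : ℝ) :
    4 * a ^ 3 - 3 * a * r ^ 2 - r ^ 3 = (a - r) * (2 * a + r) ^ 2 := by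
  ring

lemma le_two_mul_div_sqrt_three (ha : 0 ≤ a) : a ≤ 2 * a / √3 := by
  have h : √3 ≤ 2 := Real.sqrt_le_iff.2 (by norm_num)
  rw [le_div_iff₀ (by positivity), mul_comm 2]
  exact mul_le_mul_of_nonneg_left h ha

lemma le_two_mul_div_sqrt_three_iff (ha : 0 < a) (hr : 0 ≤ r) :
    r ≤ 2 * a / √3 ↔ 0 ≤ 4 * a ^ 3 - 3 * a * r ^ 2 := by
  have hfac : 4 * a ^ 3 - 3 * a * r ^ 2 = a * ((2 * a) ^ 2 - r ^ 2 * 3) := by ring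
  rw [le_div_iff₀ (by positivity), ← sq_le_sq₀ (by positivity) (by positivity), mul_pow,
    Real.sq_sqrt (by norm_num), hfac, mul_nonneg_iff_of_pos_left ha, sub_nonneg]

lemma volume_real_cubicSlice_of_le (hr : 0 ≤ r) (hra : r ≤ a) :
    volume.real (cubicSlice a r ∩ Set.Icc (-1) 1) = 2 := by
  have hsub : Set.Icc (-1) 1 ⊆ cubicSlice a r := fun u hu => by
    have hle : 0 ≤ (a - r) * (2 * a + r) ^ 2 := mul_nonneg (sub_nonneg.2 hra) (sq_nonneg _)
    rw [← cube_sub_sub_eq_sub_mul_sq, sub_nonneg] at hle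
    exact (mul_le_of_le_one_right (pow_nonneg hr 3) (abs_le.2 hu)).trans hle
  rw [Set.inter_eq_right.2 hsub, Real.volume_real_Icc]
  norm_num

lemma pow_three_mul_volume_real_cubicSlice (ha : 0 < a) (har : a ≤ r) (hr : r ≤ 2 * a / √3) :
    r ^ 3 * volume.real (cubicSlice a r ∩ Set.Icc (-1) 1) =
      2 * (4 * a ^ 3 - 3 * a * r ^ 2) := by
  have hr0 : 0 < r := ha.trans_le har
  have hr3 : 0 < r ^ 3 := pow_pos hr0 3
  set q := (4 * a ^ 3 - 3 * a * r ^ 2) / r ^ 3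
  have hq0 : 0 ≤ q :=
    div_nonneg ((le_two_mul_div_sqrt_three_iff ha hr0.le).1 hr) hr3.le
  have hq1 : q ≤ 1 := by
    rw [div_le_one hr3, ← sub_nonpos, cube_sub_sub_eq_sub_mul_sq]
    exact mul_nonpos_of_nonpos_of_nonneg (sub_nonpos.2 har) (sq_nonneg _)
  have hslice : cubicSlice a r ∩ Set.Icc (-1) 1 = Set.Icc (-q) q := by
    ext u
    simp only [cubicSlice, Set.mem_inter_iff, Set.mem_ofPred_eq, Set.mem_Icc, ← abs_le,
      ← le_div_iff₀' hr3]
    exact and_iff_left_of_imp fun h => h.trans hq1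
  rw [hslice, Real.volume_real_Icc_of_le (by linarith)]
  simp only [q]
  field_simp
  ring

lemma cubicSlice_eq_empty (ha : 0 < a) (hr : 2 * a / √3 < r) : cubicSlice a r = ∅ := by
  have hr0 : 0 ≤ r := (by positivity : 0 ≤ 2 * a / √3).trans hr.le
  rw [← not_le, le_two_mul_div_sqrt_three_iff ha hr0, not_le] at hr
  exact Set.eq_empty_of_forall_notMem fun u hu =>
    (hr.trans_le (by positivity : 0 ≤ r ^ 3 * |u|)).not_ge hu

lemma integral_volume_real_cubicSlice (ha : 0 < a) :
    ∫ r in Set.Ioi (0 : ℝ),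
        r ^ 4 * volume.real (cubicSlice a r ∩ Set.Icc (-1) 1) * rexp (-r ^ 2 / 2) =
      2 * ((∫ r in (0 : ℝ)..a, r ^ 4 * rexp (-r ^ 2 / 2)) +
        ∫ r in a..(2 * a / √3), (4 * a ^ 3 * r - 3 * a * r ^ 3) * rexp (-r ^ 2 / 2)) := by
  set b := 2 * a / √3
  have hab : a ≤ b := le_two_mul_div_sqrt_three ha.le
  set f := fun r => r ^ 4 * volume.real (cubicSlice a r ∩ Set.Icc (-1) 1) * rexp (-r ^ 2 / 2)
  set g := fun r => r ^ 4 * rexp (-r ^ 2 / 2)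
  set h := fun r => (4 * a ^ 3 * r - 3 * a * r ^ 3) * rexp (-r ^ 2 / 2)
  have hfg : Set.EqOn f (fun r => 2 * g r) (Set.uIcc 0 a) := fun r hr => by
    rw [Set.uIcc_of_le ha.le] at hr
    simp only [f, g, volume_real_cubicSlice_of_le hr.1 hr.2]
    ring
  have hfh : Set.EqOn f (fun r => 2 * h r) (Set.uIcc a b) := fun r hr => by
    rw [Set.uIcc_of_le hab] at hr
    simp only [f, h]
    rw [pow_succ', mul_assoc r, pow_three_mul_volume_real_cubicSlice ha hr.1 hr.2]
    ring
  have hg : IntervalIntegrable (fun r => 2 * g r) volume 0 a :=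
    Continuous.intervalIntegrable (by fun_prop) _ _
  have hh : IntervalIntegrable (fun r => 2 * h r) volume a b :=
    Continuous.intervalIntegrable (by fun_prop) _ _
  have hf : ∀ r ∈ Set.Ioi 0 \ Set.Ioc 0 b, f r = 0 := fun r hr => by
    have hbr : b < r := not_le.1 fun hrb => hr.2 ⟨hr.1, hrb⟩
    simp only [f, cubicSlice_eq_empty ha hbr, Set.empty_inter, measureReal_empty, mul_zero,
      zero_mul]
  rw [setIntegral_eq_of_subset_of_forall_sdiff_eq_zero measurableSet_Ioi
      Set.Ioc_subset_Ioi_self hf, ← intervalIntegral.integral_of_le (ha.le.trans hab),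
    ← intervalIntegral.integral_add_adjacent_intervals
      (hg.congr (hfg.symm.mono Set.uIoc_subset_uIcc))
      (hh.congr (hfh.symm.mono Set.uIoc_subset_uIcc)),
    intervalIntegral.integral_congr hfg, intervalIntegral.integral_congr hfh,
    intervalIntegral.integral_const_mul, intervalIntegral.integral_const_mul, mul_add]

end Slices

theorem stdGaussian_real_spectralBall {a : ℝ} (ha : 0 < a) :
    (stdGaussian (EuclideanSpace ℝ (Fin 5))).real (spectralBall a) =
      2 * stdNormalCDF a + 6 * stdNormalCDF'' a - 2 * √3 * stdNormalCDF'' (2 * a / √3) - 1 := by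
  have hpolar := isCartanMunzner_cartanCubic.stdGaussian_real_mul (by norm_num) (by simp)
    (isClosed_spectralBall a).measurableSet (measurableSet_cubicSlice a)
    fun r hr ω => smul_mem_spectralBall_iff ha hr ω
  rw [integral_Ioi_pow_four_mul_exp_neg_sq_half, integral_volume_real_cubicSlice ha,
    integral_pow_four_mul_exp_neg_sq_half, integral_cubic_mul_exp_neg_sq_half, div_pow,
    Real.sq_sqrt (by norm_num)] at hpolar
  have hπ : √(2 * π) ≠ 0 := by positivity
  rw [← eq_div_iff (by positivity)] at hpolar
  rw [hpolar, stdNormalCDF_eq, stdNormalCDF'', stdNormalCDF'', div_pow, Real.sq_sqrt (by norm_num)]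
  field_simp
  ring

lemma stdGaussian_spectralBall_zero :
    stdGaussian (EuclideanSpace ℝ (Fin 5)) (spectralBall 0) = 0 := by
  refine measure_mono_null (fun y hy => ?_)
    (stdGaussian_absolutelyContinuous (measure_singleton (0 : EuclideanSpace ℝ (Fin 5))))
  by_contra hne
  have hnorm : 0 < ‖y‖ := norm_pos_iff.2 hne
  have hmem : y ∈ spectralBall (‖y‖ / 2) := fun v hv => (hy v hv).trans (half_pos hnorm).le
  rw [mem_spectralBall_iff (half_pos hnorm)] at hmem
  have hcube : 0 < ‖y‖ ^ 3 := pow_pos hnorm 3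
  linarith [abs_nonneg (MvPolynomial.eval y.ofLp cartanCubic)]

lemma stdGaussian_frontier_spectralBall (a : ℝ) :
    stdGaussian (EuclideanSpace ℝ (Fin 5)) (frontier (spectralBall a)) = 0 :=
  stdGaussian_absolutelyContinuous ((convex_spectralBall a).addHaar_frontier volume)

/-! ### The null distribution -/

lemma stdGaussian_real_spectralBall_sqrt_five {ℓ : ℝ} (hℓ : 0 ≤ ℓ) :
    (stdGaussian (EuclideanSpace ℝ (Fin 5))).real (spectralBall (√5 * ℓ / 2)) =
      if 0 < ℓ then
        2 * stdNormalCDF (√5 * ℓ / 2) + 6 * stdNormalCDF'' (√5 * ℓ / 2)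
          - 2 * √3 * stdNormalCDF'' (√5 * ℓ / √3) - 1 else 0 := by
  rcases hℓ.eq_or_lt with rfl | hpos
  · simp [measureReal_def, stdGaussian_spectralBall_zero]
  · rw [if_pos hpos, stdGaussian_real_spectralBall (by positivity), mul_div_cancel₀ _ two_ne_zero]

lemma IsUniformOnSphere.ae_pi_sum_sq_eq_one {ι n : Type*} [Fintype ι] [Fintype n] [DecidableEq n]
    {U : Measure (n → ℝ)} [IsProbabilityMeasure U] (hU : IsUniformOnSphere U) :
    ∀ᵐ x ∂Measure.pi fun _ : ι => U, ∀ i, ∑ a, x i a ^ 2 = 1 :=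
  ae_all_iff.2 fun i =>
    (Measure.quasiMeasurePreserving_eval (fun _ : ι => U) i).ae hU.ae_sum_sq_eq_one

lemma IsUniformOnSphere.pi_statistic_le_ae_eq {n : ℕ} (hn : 0 < n) {U : Measure (Fin 3 → ℝ)}
    [IsProbabilityMeasure U] (hU : IsUniformOnSphere U) (ℓ : ℝ) :
    {x | (√n)⁻¹ • ∑ i, harmonicVec (x i) ∈ spectralBall (√5 * ℓ / 2)}
      =ᵐ[Measure.pi fun _ : Fin n => U]
        {x | √n * max |3 * maxEig (Sn 3 n x) - 1| |3 * minEig (Sn 3 n x) - 1| ≤ ℓ} := by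
  filter_upwards [hU.ae_pi_sum_sq_eq_one] with x hx
  exact propext (inv_sqrt_smul_sum_harmonicVec_mem_spectralBall_iff hn hx ℓ)

/-- Corollary 5.1(ii), case `p = 3`, two-sided statistic.
Under uniformity on `S²`, `T_±^{(n)} = √n max(|3λ̂_{n1}-1|, |3λ̂_{n3}-1|)` converges in
distribution to the law with cdf
`ℓ ↦ {2Φ(√5 ℓ/2) + 6Φ''(√5 ℓ/2) - 2√3 Φ''(√5 ℓ/√3) - 1} 1[ℓ > 0]` (this cdf is continuous,
so cdf convergence holds at every point). -/
theorem sphere_twosided_eigenvalue_statistic_null_limit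
    (U : Measure (Fin 3 → ℝ)) [IsProbabilityMeasure U]
    (hUsphere : U {x : Fin 3 → ℝ | ∑ a, x a ^ 2 = 1}ᶜ = 0)
    (hUrot : ∀ O : Matrix (Fin 3) (Fin 3) ℝ, O * Oᵀ = 1 →
      Measure.map (fun x => O.mulVec x) U = U) :
    ∀ ℓ : ℝ,
      Tendsto (fun n => ((Measure.pi (fun _ : Fin n => U))
          {x | Real.sqrt n *
            max |3 * maxEig (Sn 3 n x) - 1| |3 * minEig (Sn 3 n x) - 1| ≤ ℓ}).toReal) atTop
        (𝓝 (if 0 < ℓ then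
          2 * stdNormalCDF (Real.sqrt 5 * ℓ / 2) + 6 * stdNormalCDF'' (Real.sqrt 5 * ℓ / 2)
            - 2 * Real.sqrt 3 * stdNormalCDF'' (Real.sqrt 5 * ℓ / Real.sqrt 3) - 1 else 0)) := by
  intro ℓ
  have hU : IsUniformOnSphere U := ⟨hUsphere, hUrot⟩
  rcases lt_or_ge ℓ 0 with hneg | hnonneg
  · have hempty (n : ℕ) : {x : Fin n → Fin 3 → ℝ | √n *
        max |3 * maxEig (Sn 3 n x) - 1| |3 * minEig (Sn 3 n x) - 1| ≤ ℓ} = ∅ :=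
      Set.eq_empty_of_forall_notMem fun x hx => (hneg.trans_le (by positivity)).not_ge hx
    simp only [hempty, measure_empty, ENNReal.toReal_zero, if_neg hneg.not_gt, tendsto_const_nhds]
  · rw [← stdGaussian_real_spectralBall_sqrt_five hnonneg]
    have hclt := tendsto_pi_real_inv_sqrt_smul_sum_mem continuous_harmonicVec.measurable
      hU.integral_inner_harmonicVec hU.integral_inner_harmonicVec_sq
      (isClosed_spectralBall (√5 * ℓ / 2)).measurableSet
      (stdGaussian_frontier_spectralBall (√5 * ℓ / 2))
    refine hclt.congr' ?_
    filter_upwards [eventually_gt_atTop 0] with n hn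
    exact congrArg ENNReal.toReal (measure_congr (hU.pi_statistic_le_ae_eq hn ℓ))

end
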